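/- There exists an absolute constant γ₀ > 0 such that for every constant ε ∈ (0,1) and every ρ > 0 there exists m₀ such that for all m ≥ m₀ and all r with 1 ≤ r < γ₀·m the following holds. Set K = ⌊(1-ε)·binom(m,≤r)⌋ and let Z be a uniformly random K-element subset of F₂^m. Then with probability at least 1 - ρ: for every multilinear polynomial P in m variables over F₂ of total degree at most m-2r-2 and every vector e ∈ F₂^{F₂^m} whose support is contained in Z, the evaluation vector of P is the unique codeword of RM(m, m-2r-2) at minimal Hamming distance from (evaluation vector of P) + e. (That is, RM(m,m-2r-2) uniquely decodes from the K random errors indexed by Z.) -/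

import Mathlib

/-- `binomLe m r = ∑_{i=0}^r C(m,i)`, written `binom(m, ≤ r)`. -/
def binomLe (m r : ℕ) : ℕ := ∑ i ∈ Finset.range (r + 1), Nat.choose m i

/-- Index type for multilinear monomials of degree at most `r` in `m` variables:
subsets `S ⊆ {1,…,m}` with `|S| ≤ r`. -/
abbrev MonIdx (m r : ℕ) := {S : Finset (Fin m) // S.card ≤ r}

/-- `RM(m,r)` as the space of coefficient vectors of multilinear polynomials in `m`
variables of total degree at most `r` over `F₂`. -/
abbrev RMcode (m r : ℕ) := MonIdx m r → ZMod 2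

/-- Evaluation of a polynomial (given by its coefficients) at the point `z`,
as a linear map: `c ↦ ∑_{|S| ≤ r} c_S ∏_{i ∈ S} z_i`. -/
def evalLin (m r : ℕ) (z : Fin m → ZMod 2) : RMcode m r →ₗ[ZMod 2] ZMod 2 :=
  ∑ S : MonIdx m r, (∏ i ∈ S.1, z i) • LinearMap.proj S

/-- The degree-`r` vanishing space `I_r(Z)` of the set `Z ⊆ F₂^m`. -/
def vanishing (m r : ℕ) (Z : Set (Fin m → ZMod 2)) : Submodule (ZMod 2) (RMcode m r) :=
  ⨅ z ∈ Z, LinearMap.ker (evalLin m r z)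

/-- The vector `z^{(r)}` of evaluations at `z` of all multilinear monomials of degree `≤ r`. -/
def monVec (m r : ℕ) (z : Fin m → ZMod 2) : MonIdx m r → ZMod 2 := fun S => ∏ i ∈ S.1, z i

/-- Fractional Hamming weight of the polynomial with coefficients `c`. -/
noncomputable def wt (m r : ℕ) (c : RMcode m r) : ℝ :=
  ((Finset.univ.filter (fun z : Fin m → ZMod 2 => evalLin m r z c ≠ 0)).card : ℝ) / 2 ^ m

/-- The number of zeros in `F₂^m` of the polynomial with coefficients `c`,
i.e. `(1 - wt(P)) · 2^m`. -/
def numZeros (m r : ℕ) (c : RMcode m r) : ℕ :=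
  (Finset.univ.filter (fun z : Fin m → ZMod 2 => evalLin m r z c = 0)).card

/-- The degree-`r` closure of `Z ⊆ F₂^m`. -/
def closureSet (m r : ℕ) (Z : Set (Fin m → ZMod 2)) : Set (Fin m → ZMod 2) :=
  {u | ∀ c ∈ vanishing m r Z, evalLin m r u c = 0}

namespace ReedMuller

/-- The Boolean cube `F₂^m`. -/
abbrev Cube (m : ℕ) := Fin m → ZMod 2

/-- Restriction of a function on the cube to the facet where the first coordinate is `a`. -/
def slice {n : ℕ} (a : ZMod 2) :
    (Cube (n + 1) → ZMod 2) →ₗ[ZMod 2] (Cube n → ZMod 2) :=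
  LinearMap.funLeft (ZMod 2) (ZMod 2) fun x : Cube n => (Fin.cons a x : Cube (n + 1))

/-- Functions on the cube given by polynomials of degree less than `s`. -/
def polyLT : (m s : ℕ) → Submodule (ZMod 2) (Cube m → ZMod 2)
  | 0, 0 => ⊥
  | 0, _ + 1 => ⊤
  | _ + 1, 0 => ⊥
  | n + 1, s + 1 =>
    (polyLT n (s + 1)).comap (slice 0) ⊓ (polyLT n s).comap (slice 0 + slice 1)

/-- The dimension of the space of polynomials of degree less than `s`. -/
def binomLT (m s : ℕ) : ℕ := ∑ i ∈ Finset.range s, m.choose i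

lemma slice_apply {n : ℕ} (a : ZMod 2) (f : Cube (n + 1) → ZMod 2) (x : Cube n) :
    slice a f x = f (Fin.cons a x) := rfl

@[simp] lemma polyLT_zero (m : ℕ) : polyLT m 0 = ⊥ := by
  cases m <;> rfl

lemma mem_polyLT_succ {n s : ℕ} {f : Cube (n + 1) → ZMod 2} :
    f ∈ polyLT (n + 1) (s + 1) ↔
      slice 0 f ∈ polyLT n (s + 1) ∧ slice 0 f + slice 1 f ∈ polyLT n s := by
  simp [polyLT]

lemma polyLT_le_succ (m s : ℕ) : polyLT m s ≤ polyLT m (s + 1) := by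
  induction m generalizing s with
  | zero => cases s <;> simp [polyLT]
  | succ n ih =>
    cases s with
    | zero => simp
    | succ s =>
      intro f hf
      rw [mem_polyLT_succ] at hf ⊢
      exact ⟨ih _ hf.1, ih _ hf.2⟩

lemma polyLT_mono (m : ℕ) : Monotone (polyLT m) :=
  monotone_nat_of_le_succ (polyLT_le_succ m)

lemma add_self_zmod {α : Type*} (f : α → ZMod 2) : f + f = 0 := by
  funext x
  exact CharTwo.add_self_eq_zero (f x)

lemma slice_one_mem {n s : ℕ} {f : Cube (n + 1) → ZMod 2} (hf : f ∈ polyLT (n + 1) (s + 1)) :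
    slice 1 f ∈ polyLT n (s + 1) := by
  rw [mem_polyLT_succ] at hf
  have h := add_mem hf.1 (polyLT_le_succ _ _ hf.2)
  rwa [← add_assoc, add_self_zmod, zero_add] at h

lemma zmod_two_cases (a : ZMod 2) : a = 0 ∨ a = 1 := by
  revert a; decide

lemma ne_zero_iff_one (a : ZMod 2) : a ≠ 0 ↔ a = 1 := by
  revert a; decide

lemma mul_mem_polyLT {m : ℕ} : ∀ {a b : ℕ} {f g : Cube m → ZMod 2},
    f ∈ polyLT m (a + 1) → g ∈ polyLT m (b + 1) → f * g ∈ polyLT m (a + b + 1) := by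
  induction m with
  | zero => intros; simp [polyLT]
  | succ n ih =>
    intro a b f g hf hg
    have hf1 := slice_one_mem hf
    have hg1 := slice_one_mem hg
    rw [mem_polyLT_succ] at hf hg ⊢
    have hmul : ∀ c, slice c (f * g) = slice c f * slice c g := fun c => rfl
    rw [hmul, hmul]
    refine ⟨ih hf.1 hg.1, ?_⟩
    have key : slice 0 f * slice 0 g + slice 1 f * slice 1 g =
        slice 0 f * (slice 0 g + slice 1 g) + (slice 0 f + slice 1 f) * slice 1 g := by
      have h := add_self_zmod (slice 0 f * slice 1 g)
      linear_combination -h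
    rw [key]
    refine add_mem ?_ ?_
    · cases b with
      | zero =>
        have h0 : slice 0 g + slice 1 g = 0 := by simpa using hg.2
        simp [h0]
      | succ b => exact ih hf.1 hg.2
    · cases a with
      | zero =>
        have h0 : slice 0 f + slice 1 f = 0 := by simpa using hf.2
        simp [h0]
      | succ a =>
        have := ih hf.2 hg1
        rwa [show a + b + 1 = a + 1 + b by ring] at this

lemma one_mem_polyLT (m s : ℕ) : (1 : Cube m → ZMod 2) ∈ polyLT m (s + 1) := by
  induction m generalizing s with
  | zero => simp [polyLT]
  | succ n ih =>
    rw [mem_polyLT_succ]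
    refine ⟨ih s, ?_⟩
    have : slice 0 (1 : Cube (n + 1) → ZMod 2) + slice 1 (1 : Cube (n + 1) → ZMod 2) = 0 :=
      add_self_zmod _
    rw [this]
    exact zero_mem _

lemma const_mem_polyLT (m s : ℕ) (c : ZMod 2) : (fun _ : Cube m => c) ∈ polyLT m (s + 1) := by
  have := (polyLT m (s + 1)).smul_mem c (one_mem_polyLT m s)
  convert this using 1
  funext x
  simp

lemma coord_mem_polyLT {m : ℕ} (i : Fin m) : (fun x : Cube m => x i) ∈ polyLT m 2 := by
  induction m with
  | zero => exact i.elim0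
  | succ n ih =>
    rw [mem_polyLT_succ]
    refine Fin.cases ?_ (fun j => ?_) i
    · refine ⟨?_, ?_⟩
      · exact const_mem_polyLT n 1 0
      · convert const_mem_polyLT n 0 1 using 1
        funext x
        simp [slice_apply]
    · refine ⟨ih j, ?_⟩
      convert zero_mem (polyLT n 1) using 1
      exact add_self_zmod _

/-- Substituting affine forms does not increase the degree. -/
lemma comp_mem_polyLT {n : ℕ} : ∀ {s m : ℕ} {f : Cube n → ZMod 2} {L : Cube m → Cube n},
    f ∈ polyLT n s → (∀ i, (fun x => L x i) ∈ polyLT m 2) → (fun x => f (L x)) ∈ polyLT m s := by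
  induction n with
  | zero =>
    intro s m f L hf _
    cases s with
    | zero =>
      have : f = 0 := by simpa using hf
      subst this
      exact zero_mem _
    | succ s =>
      convert const_mem_polyLT m s (f default) using 1
      funext x
      congr 1
      exact Subsingleton.elim _ _
  | succ n ih =>
    intro s m f L hf hL
    cases s with
    | zero =>
      have : f = 0 := by simpa using hf
      subst this
      exact zero_mem _
    | succ s =>
      rw [mem_polyLT_succ] at hf
      have h0 := ih (L := fun x => Fin.tail (L x)) hf.1 (fun i => hL i.succ)
      have h1 := ih (L := fun x => Fin.tail (L x)) hf.2 (fun i => hL i.succ)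
      have key : (fun x => f (L x)) = (fun x => slice 0 f (Fin.tail (L x))) +
          (fun x => (slice 0 f + slice 1 f) (Fin.tail (L x))) * (fun x => L x 0) := by
        funext x
        have hx : L x = Fin.cons (L x 0) (Fin.tail (L x)) := (Fin.cons_self_tail _).symm
        simp only [Pi.add_apply, Pi.mul_apply, slice_apply]
        rcases zmod_two_cases (L x 0) with h | h
        · rw [h, mul_zero, add_zero, ← h, ← hx]
        · rw [h, mul_one, ← add_assoc, CharTwo.add_self_eq_zero, zero_add, ← h, ← hx]
      rw [key]
      refine add_mem h0 ?_
      cases s with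
      | zero =>
        have : slice 0 f + slice 1 f = 0 := by simpa using hf.2
        rw [this]
        convert zero_mem (polyLT m 1) using 1
        funext x
        simp
      | succ s => exact mul_mem_polyLT h1 (hL 0)

lemma translate_mem_polyLT {m s : ℕ} {f : Cube m → ZMod 2} (hf : f ∈ polyLT m s) (y : Cube m) :
    (fun x => f (x + y)) ∈ polyLT m s :=
  comp_mem_polyLT hf fun i =>
    add_mem (coord_mem_polyLT i) (const_mem_polyLT m 1 (y i))

/-- Directional derivatives lower the degree. -/
lemma deriv_mem_polyLT {m : ℕ} : ∀ {s : ℕ} {f : Cube m → ZMod 2} (y : Cube m),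
    f ∈ polyLT m (s + 1) → (fun x => f x + f (x + y)) ∈ polyLT m s := by
  induction m with
  | zero =>
    intro s f y _
    convert zero_mem (polyLT 0 s) using 1
    funext x
    rw [Subsingleton.elim (x + y) x]
    exact CharTwo.add_self_eq_zero _
  | succ n ih =>
    intro s f y hf
    have hf' := mem_polyLT_succ.1 hf
    have hadd : ∀ (a : ZMod 2) (x : Cube n),
        (Fin.cons a x : Cube (n + 1)) + y = Fin.cons (a + y 0) (x + Fin.tail y) := by
      intro a x
      funext i
      refine Fin.cases ?_ (fun j => ?_) i <;> simp [Fin.tail]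
    have h0 : slice 0 (fun x => f x + f (x + y)) ∈ polyLT n s := by
      have e : slice 0 (fun x => f x + f (x + y)) =
          (fun x => slice 0 f x + f (Fin.cons (y 0) (x + Fin.tail y))) := by
        funext x
        simp only [slice_apply]
        rw [hadd, zero_add]
      rw [e]
      rcases zmod_two_cases (y 0) with h | h
      · rw [h]; exact ih (Fin.tail y) hf'.1
      · rw [h]
        have := add_mem (ih (Fin.tail y) hf'.1) (translate_mem_polyLT hf'.2 (Fin.tail y))
        convert this using 1
        funext x
        simp only [Pi.add_apply, slice_apply]
        linear_combination -CharTwo.add_self_eq_zero (f (Fin.cons 0 (x + Fin.tail y)))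
    cases s with
    | zero =>
      have hconst : slice 0 f = slice 1 f := by
        have h2 : slice 0 f + slice 1 f = 0 := by simpa using hf'.2
        funext x
        have := congrFun h2 x
        simpa [CharTwo.add_eq_zero] using this
      have h0' : slice 0 (fun x => f x + f (x + y)) = 0 := by simpa using h0
      have hall : ∀ (a : ZMod 2) (x : Cube n), f (Fin.cons a x) = f (Fin.cons 0 x) := by
        intro a x
        rcases zmod_two_cases a with h | h
        · rw [h]
        · rw [h]; exact (congrFun hconst x).symm
      rw [polyLT_zero, Submodule.mem_bot]
      funext z
      have hz : z = Fin.cons (z 0) (Fin.tail z) := (Fin.cons_self_tail _).symm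
      have h3 := congrFun h0' (Fin.tail z)
      simp only [slice_apply, hadd, Pi.zero_apply] at h3
      rw [hall (0 + y 0)] at h3
      change f z + f (z + y) = 0
      rw [hz, hadd, hall, hall (z 0 + y 0)]
      exact h3
    | succ s =>
      rw [mem_polyLT_succ]
      refine ⟨h0, ?_⟩
      have := ih (Fin.tail y) hf'.2
      convert this using 1
      funext x
      simp only [Pi.add_apply, slice_apply, hadd]
      rcases zmod_two_cases (y 0) with h | h
      · rw [h]
        simp only [add_zero]
        ring
      · rw [h]
        simp only [zero_add, CharTwo.add_self_eq_zero]
        ring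

lemma sum_cube_succ {M : Type*} [AddCommMonoid M] {n : ℕ} (f : Cube (n + 1) → M) :
    ∑ x, f x = ∑ x : Cube n, f (Fin.cons 0 x) + ∑ x : Cube n, f (Fin.cons 1 x) := by
  rw [← (Fin.consEquiv (fun _ : Fin (n + 1) => ZMod 2)).sum_comp, Fintype.sum_prod_type]
  exact Fin.sum_univ_two _

/-- A polynomial whose degree is less than the number of variables sums to zero. -/
lemma sum_eq_zero_of_mem_polyLT {m : ℕ} {f : Cube m → ZMod 2} (hf : f ∈ polyLT m m) :
    ∑ x, f x = 0 := by
  induction m with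
  | zero =>
    have : f = 0 := by simpa using hf
    simp [this]
  | succ n ih =>
    rw [sum_cube_succ, ← Finset.sum_add_distrib]
    exact ih (mem_polyLT_succ.1 hf).2

/-- The number of points where a function on the cube does not vanish. -/
def weight {m : ℕ} (f : Cube m → ZMod 2) : ℕ := (Finset.univ.filter fun x => f x ≠ 0).card

lemma weight_succ {n : ℕ} (f : Cube (n + 1) → ZMod 2) :
    weight f = weight (slice 0 f) + weight (slice 1 f) := by
  rw [weight, weight, weight, Finset.card_filter, Finset.card_filter, Finset.card_filter]
  exact sum_cube_succ (fun x => if f x ≠ 0 then 1 else 0)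

/-- The minimum distance of the Reed–Muller code. -/
lemma two_pow_le_weight {m : ℕ} : ∀ {s : ℕ} {f : Cube m → ZMod 2},
    f ∈ polyLT m (s + 1) → f ≠ 0 → 2 ^ m ≤ weight f * 2 ^ s := by
  induction m with
  | zero =>
    intro s f _ h
    have : 1 ≤ weight f := by
      obtain ⟨x, hx⟩ := Function.ne_iff.1 h
      exact Finset.card_pos.2 ⟨x, Finset.mem_filter.2 ⟨Finset.mem_univ _, hx⟩⟩
    simpa using Nat.mul_le_mul this (Nat.one_le_two_pow (n := s))
  | succ n ih =>
    intro s f hf hne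
    rw [weight_succ]
    have hf1 := slice_one_mem hf
    have hf' := mem_polyLT_succ.1 hf
    have hcase : ∀ g : Cube n → ZMod 2, g ≠ 0 → g ∈ polyLT n s →
        2 ^ (n + 1) ≤ weight g * 2 ^ s := by
      intro g hg hmem
      cases s with
      | zero => exact absurd (by simpa using hmem) hg
      | succ s =>
        have := ih hmem hg
        rw [pow_succ, pow_succ, ← mul_assoc]
        exact Nat.mul_le_mul_right 2 this
    by_cases h0 : slice 0 f = 0
    · have h1 : slice 1 f ≠ 0 := by
        intro h1
        apply hne
        funext z
        rw [← Fin.cons_self_tail z]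
        rcases zmod_two_cases (z 0) with h | h
        · rw [h]; exact congrFun h0 _
        · rw [h]; exact congrFun h1 _
      have := hcase _ h1 (by simpa [h0] using hf'.2)
      exact this.trans (Nat.mul_le_mul_right _ (Nat.le_add_left _ _))
    · by_cases h1 : slice 1 f = 0
      · have := hcase _ h0 (by simpa [h1] using hf'.2)
        exact this.trans (Nat.mul_le_mul_right _ (Nat.le_add_right _ _))
      · have e0 := ih hf'.1 h0
        have e1 := ih hf1 h1
        rw [pow_succ, add_mul]
        omega

lemma binomLT_succ_succ (n s : ℕ) :
    binomLT (n + 1) (s + 1) = binomLT n (s + 1) + binomLT n s := by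
  simp only [binomLT]
  rw [Finset.sum_range_succ', Finset.sum_range_succ' (fun i => n.choose i)]
  simp only [Nat.choose_succ_succ', Finset.sum_add_distrib, Nat.choose_zero_right]
  omega

lemma card_polyLT (m s : ℕ) : Nat.card (polyLT m s) = 2 ^ binomLT m s := by
  induction m generalizing s with
  | zero =>
    cases s with
    | zero => simp [polyLT, binomLT]
    | succ s =>
      have : binomLT 0 (s + 1) = 1 := by
        simp [binomLT, Finset.sum_range_succ']
      rw [this, polyLT, Nat.card_congr (Submodule.topEquiv (R := ZMod 2)).toEquiv]
      simp [Nat.card_eq_fintype_card]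
  | succ n ih =>
    cases s with
    | zero => simp [binomLT]
    | succ s =>
      rw [binomLT_succ_succ, pow_add, ← ih, ← ih, ← Nat.card_prod]
      refine Nat.card_congr
        { toFun := fun f => (⟨slice 0 f.1, (mem_polyLT_succ.1 f.2).1⟩,
            ⟨slice 0 f.1 + slice 1 f.1, (mem_polyLT_succ.1 f.2).2⟩)
          invFun := fun p => ⟨fun x => p.1.1 (Fin.tail x) + x 0 * p.2.1 (Fin.tail x), ?_⟩
          left_inv := ?_
          right_inv := ?_ }
      · rw [mem_polyLT_succ]
        refine ⟨?_, ?_⟩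
        · convert p.1.2 using 1
          funext x
          simp [slice_apply]
        · convert p.2.2 using 1
          funext x
          simp only [Pi.add_apply, slice_apply, Fin.tail_cons, Fin.cons_zero]
          rw [zero_mul, add_zero, one_mul, ← add_assoc, CharTwo.add_self_eq_zero, zero_add]
      · intro f
        ext x
        simp only [Pi.add_apply, slice_apply]
        have hx : x = Fin.cons (x 0) (Fin.tail x) := (Fin.cons_self_tail _).symm
        rcases zmod_two_cases (x 0) with h | h
        · rw [h, zero_mul, add_zero, ← h, ← hx]
        · rw [h, one_mul, ← add_assoc, CharTwo.add_self_eq_zero, zero_add, ← h, ← hx]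
      · intro p
        ext x
        · simp [slice_apply]
        · simp only [Pi.add_apply, slice_apply, Fin.tail_cons, Fin.cons_zero]
          rw [zero_mul, add_zero, one_mul, ← add_assoc, CharTwo.add_self_eq_zero, zero_add]

/-- Every function agrees on `T` with a polynomial of degree less than `s`. -/
def Interpolates {m : ℕ} (s : ℕ) (T : Finset (Cube m)) : Prop :=
  ∀ φ : Cube m → ZMod 2, ∃ f ∈ polyLT m s, ∀ x ∈ T, f x = φ x

/-- The number of natural numbers below `a` whose binary expansion has fewer than `s` ones. -/
def lowDigitCount (s a : ℕ) : ℕ :=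
  match s, a with
  | 0, _ => 0
  | _ + 1, 0 => 0
  | _ + 1, 1 => 1
  | s + 1, a + 2 => lowDigitCount (s + 1) ((a + 3) / 2) + lowDigitCount s ((a + 2) / 2)
termination_by a
decreasing_by all_goals omega

@[simp] lemma lowDigitCount_zero (a : ℕ) : lowDigitCount 0 a = 0 := by
  simp [lowDigitCount]

@[simp] lemma lowDigitCount_zero_right (s : ℕ) : lowDigitCount s 0 = 0 := by
  cases s <;> simp [lowDigitCount]

@[simp] lemma lowDigitCount_one (s : ℕ) : lowDigitCount (s + 1) 1 = 1 := by
  simp [lowDigitCount]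

lemma lowDigitCount_even (s b : ℕ) :
    lowDigitCount (s + 1) (2 * b) = lowDigitCount (s + 1) b + lowDigitCount s b := by
  rcases b with _ | b
  · simp
  · rw [show 2 * (b + 1) = 2 * b + 2 by ring, lowDigitCount,
      show (2 * b + 3) / 2 = b + 1 by omega, show (2 * b + 2) / 2 = b + 1 by omega]

lemma lowDigitCount_odd (s b : ℕ) :
    lowDigitCount (s + 1) (2 * b + 1) = lowDigitCount (s + 1) (b + 1) + lowDigitCount s b := by
  rcases b with _ | b
  · simp
  · rw [show 2 * (b + 1) + 1 = (2 * b + 1) + 2 by ring, lowDigitCount,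
      show (2 * b + 1 + 3) / 2 = b + 1 + 1 by omega,
      show (2 * b + 1 + 2) / 2 = b + 1 by omega]

lemma lowDigitCount_le_succ (s a : ℕ) : lowDigitCount s a ≤ lowDigitCount s (a + 1) := by
  induction a using Nat.strong_induction_on generalizing s with
  | _ a ih =>
    rcases s with _ | s
    · simp
    rcases Nat.even_or_odd' a with ⟨b, rfl | rfl⟩
    · rcases b with _ | b
      · simp
      rw [lowDigitCount_even, lowDigitCount_odd]
      have := ih (b + 1) (by omega) (s + 1)
      omega
    · rw [show 2 * b + 1 + 1 = 2 * (b + 1) by ring, lowDigitCount_even, lowDigitCount_odd]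
      have := ih b (by omega) s
      omega

lemma lowDigitCount_mono (s : ℕ) : Monotone (lowDigitCount s) :=
  monotone_nat_of_le_succ (lowDigitCount_le_succ s)

lemma lowDigitCount_increment (s a : ℕ) :
    lowDigitCount s (a + 1) + lowDigitCount (s + 1) a ≤
      lowDigitCount (s + 1) (a + 1) + lowDigitCount s a := by
  induction a using Nat.strong_induction_on generalizing s with
  | _ a ih =>
    rcases s with _ | s
    · simpa using lowDigitCount_le_succ 1 a
    rcases Nat.even_or_odd' a with ⟨b, rfl | rfl⟩
    · rcases b with _ | b
      · simp
      have := ih (b + 1) (by omega) (s + 1)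
      simp only [lowDigitCount_even, lowDigitCount_odd]
      omega
    · have := ih b (by omega) s
      rw [show 2 * b + 1 + 1 = 2 * (b + 1) by ring]
      simp only [lowDigitCount_even, lowDigitCount_odd]
      omega

lemma lowDigitCount_add_le (s a b : ℕ) (hab : b ≤ a) :
    lowDigitCount (s + 1) (a + b) ≤ lowDigitCount (s + 1) a + lowDigitCount s b := by
  induction hn : a + b using Nat.strong_induction_on generalizing s a b with
  | _ n ih =>
    subst hn
    rcases Nat.eq_zero_or_pos b with rfl | hb
    · simp
    have ih' : ∀ s a' b', b' ≤ a' → a' + b' < a + b →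
        lowDigitCount s (a' + b') ≤ lowDigitCount s a' + lowDigitCount (s - 1) b' := by
      intro s a' b' h1 h2
      rcases s with _ | s
      · simp
      · exact ih _ h2 s a' b' h1 rfl
    have hsucc : ∀ c, lowDigitCount s (2 * c) = lowDigitCount s c + lowDigitCount (s - 1) c := by
      intro c
      rcases s with _ | s
      · simp
      · exact lowDigitCount_even s c
    have hsucc' : ∀ c, lowDigitCount s (2 * c + 1) =
        lowDigitCount s (c + 1) + lowDigitCount (s - 1) c := by
      intro c
      rcases s with _ | s
      · simp
      · exact lowDigitCount_odd s c
    have hinc : ∀ c, lowDigitCount (s - 1) (c + 1) + lowDigitCount s c ≤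
        lowDigitCount s (c + 1) + lowDigitCount (s - 1) c := by
      intro c
      rcases s with _ | s
      · simp
      · exact lowDigitCount_increment s c
    rcases Nat.even_or_odd' a with ⟨c, rfl | rfl⟩ <;> rcases Nat.even_or_odd' b with ⟨d, rfl | rfl⟩
    · have h1 := ih' (s + 1) c d (by omega) (by omega)
      have h2 := ih' s c d (by omega) (by omega)
      rw [show 2 * c + 2 * d = 2 * (c + d) by ring]
      simp only [lowDigitCount_even, hsucc, Nat.add_sub_cancel] at *
      omega
    · have h1 := ih' (s + 1) c (d + 1) (by omega) (by omega)
      have h2 := ih' s c d (by omega) (by omega)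
      rw [show 2 * c + (2 * d + 1) = 2 * (c + d) + 1 by ring]
      simp only [lowDigitCount_even, lowDigitCount_odd, hsucc, hsucc', Nat.add_sub_cancel,
        ← add_assoc] at *
      omega
    · have h1 := ih' (s + 1) (c + 1) d (by omega) (by omega)
      have h2 := ih' s c d (by omega) (by omega)
      rw [show 2 * c + 1 + 2 * d = 2 * (c + d) + 1 by ring]
      rw [show c + 1 + d = c + d + 1 by ring] at h1
      simp only [lowDigitCount_odd, hsucc, hsucc', Nat.add_sub_cancel] at *
      omega
    · rw [show 2 * c + 1 + (2 * d + 1) = 2 * (c + d + 1) by ring]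
      rcases Nat.lt_or_ge d c with hdc | hdc
      · have h1 := ih' (s + 1) (c + 1) d (by omega) (by omega)
        have h2 := ih' s c (d + 1) (by omega) (by omega)
        have h3 := hinc d
        rw [show c + 1 + d = c + d + 1 by ring] at h1
        rw [show c + (d + 1) = c + d + 1 by ring] at h2
        simp only [lowDigitCount_even, lowDigitCount_odd, hsucc, hsucc', Nat.add_sub_cancel] at *
        omega
      · obtain rfl : c = d := by omega
        rw [show 2 * (c + c + 1) = 2 * (2 * c + 1) by ring]
        simp only [lowDigitCount_even, lowDigitCount_odd, hsucc']
        omega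

lemma lowDigitCount_two_pow (n s : ℕ) : lowDigitCount s (2 ^ n) = binomLT n s := by
  induction n generalizing s with
  | zero =>
    rcases s with _ | s
    · simp [binomLT]
    · simp [binomLT, Finset.sum_range_succ']
  | succ n ih =>
    rcases s with _ | s
    · simp [binomLT]
    · rw [binomLT_succ_succ, pow_succ, mul_comm, lowDigitCount_even, ih, ih]

lemma Interpolates.subset {m s : ℕ} {S T : Finset (Cube m)} (hT : Interpolates s T)
    (h : S ⊆ T) : Interpolates s S := fun φ => by
  obtain ⟨f, hf, hfx⟩ := hT φ
  exact ⟨f, hf, fun x hx => hfx x (h hx)⟩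

lemma cons_injective_right {n : ℕ} (a : ZMod 2) :
    Function.Injective fun x : Cube n => (Fin.cons a x : Cube (n + 1)) :=
  fun _ _ h => (Fin.cons_inj.1 h).2

lemma card_eq_card_slices {n : ℕ} (A : Finset (Cube (n + 1))) :
    A.card = (Finset.univ.filter fun x : Cube n => (Fin.cons 0 x : Cube (n + 1)) ∈ A).card +
      (Finset.univ.filter fun x : Cube n => (Fin.cons 1 x : Cube (n + 1)) ∈ A).card := by
  have h : A.card = ∑ x : Cube (n + 1), if x ∈ A then 1 else 0 := by simp
  rw [Finset.card_filter, Finset.card_filter, h]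
  exact sum_cube_succ (fun x => if x ∈ A then 1 else 0)

lemma exists_interpolates_glue {n s : ℕ} (a : ZMod 2) {T₀ T₁ : Finset (Cube n)}
    (h₀ : Interpolates (s + 1) T₀) (h₁ : Interpolates s T₁) :
    Interpolates (m := n + 1) (s + 1)
      (T₀.image (fun x => (Fin.cons a x : Cube (n + 1))) ∪
        T₁.image (fun x => (Fin.cons (a + 1) x : Cube (n + 1)))) := by
  intro φ
  obtain ⟨f, hf, hfx⟩ := h₀ fun x => φ (Fin.cons a x)
  obtain ⟨g, hg, hgx⟩ := h₁ fun x => f x + φ (Fin.cons (a + 1) x)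
  refine ⟨fun z => f (Fin.tail z) + (z 0 + a) * g (Fin.tail z), ?_, ?_⟩
  · rw [mem_polyLT_succ]
    constructor
    · have : f + a • g ∈ polyLT n (s + 1) :=
        add_mem hf ((polyLT n (s + 1)).smul_mem a (polyLT_le_succ _ _ hg))
      convert this using 1
      funext x
      simp [slice_apply]
    · convert hg using 1
      funext x
      simp only [Pi.add_apply, slice_apply, Fin.tail_cons, Fin.cons_zero]
      linear_combination CharTwo.add_self_eq_zero (f x) + CharTwo.add_self_eq_zero (a * g x)
  · intro z hz
    rw [Finset.mem_union, Finset.mem_image, Finset.mem_image] at hz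
    rcases hz with ⟨x, hx, rfl⟩ | ⟨x, hx, rfl⟩
    · simp only [Fin.tail_cons, Fin.cons_zero, CharTwo.add_self_eq_zero, zero_mul, add_zero]
      exact hfx x hx
    · simp only [Fin.tail_cons, Fin.cons_zero]
      rw [hgx x hx]
      linear_combination (f x + φ (Fin.cons (a + 1) x)) * CharTwo.add_self_eq_zero a +
        CharTwo.add_self_eq_zero (f x)

/-- A set of size `a` has an interpolating subset at least as large as for an initial segment of
the integers in binary. -/
lemma exists_interpolates_subset {m : ℕ} : ∀ (s : ℕ) (A : Finset (Cube m)),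
    ∃ T ⊆ A, Interpolates s T ∧ lowDigitCount s A.card ≤ T.card := by
  induction m with
  | zero =>
    intro s A
    rcases s with _ | s
    · exact ⟨∅, by simp, fun φ => ⟨0, zero_mem _, by simp⟩, by simp⟩
    · refine ⟨A, subset_rfl, fun φ => ⟨φ, by simp [polyLT], by simp⟩, ?_⟩
      have : A.card ≤ 1 := Finset.card_le_one_of_subsingleton A
      interval_cases A.card <;> simp
  | succ n ih =>
    intro s A
    rcases s with _ | s
    · exact ⟨∅, by simp, fun φ => ⟨0, zero_mem _, by simp⟩, by simp⟩
    have hcard := card_eq_card_slices A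
    have key : ∀ a : ZMod 2,
        (Finset.univ.filter fun x : Cube n => (Fin.cons (a + 1) x : Cube (n + 1)) ∈ A).card ≤
        (Finset.univ.filter fun x : Cube n => (Fin.cons a x : Cube (n + 1)) ∈ A).card →
        A.card = (Finset.univ.filter fun x : Cube n => (Fin.cons a x : Cube (n + 1)) ∈ A).card +
          (Finset.univ.filter fun x : Cube n => (Fin.cons (a + 1) x : Cube (n + 1)) ∈ A).card →
        ∃ T ⊆ A, Interpolates (s + 1) T ∧ lowDigitCount (s + 1) A.card ≤ T.card := by
      intro a hle hA
      obtain ⟨T₀, hT₀, hi₀, hc₀⟩ :=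
        ih (s + 1) (Finset.univ.filter fun x : Cube n => (Fin.cons a x : Cube (n + 1)) ∈ A)
      obtain ⟨T₁, hT₁, hi₁, hc₁⟩ :=
        ih s (Finset.univ.filter fun x : Cube n => (Fin.cons (a + 1) x : Cube (n + 1)) ∈ A)
      refine ⟨_, ?_, exists_interpolates_glue a hi₀ hi₁, ?_⟩
      · intro z hz
        rw [Finset.mem_union, Finset.mem_image, Finset.mem_image] at hz
        rcases hz with ⟨x, hx, rfl⟩ | ⟨x, hx, rfl⟩
        · exact (Finset.mem_filter.1 (hT₀ hx)).2
        · exact (Finset.mem_filter.1 (hT₁ hx)).2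
      · rw [Finset.card_union_of_disjoint,
          Finset.card_image_of_injective _ (cons_injective_right _),
          Finset.card_image_of_injective _ (cons_injective_right _), hA]
        · exact (lowDigitCount_add_le _ _ _ hle).trans (add_le_add hc₀ hc₁)
        · rw [Finset.disjoint_left]
          rintro z hz hz'
          rw [Finset.mem_image] at hz hz'
          obtain ⟨x, _, rfl⟩ := hz
          obtain ⟨y, _, hy⟩ := hz'
          have := (Fin.cons_inj.1 hy).1
          simp at this
    rcases le_total
      (Finset.univ.filter fun x : Cube n => (Fin.cons 1 x : Cube (n + 1)) ∈ A).card
      (Finset.univ.filter fun x : Cube n => (Fin.cons 0 x : Cube (n + 1)) ∈ A).card with h | h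
    · exact key 0 (by simpa using h) (by simpa using hcard)
    · have h11 : (1 : ZMod 2) + 1 = 0 := by decide
      exact key 1 (by simpa [h11] using h) (by rw [h11, hcard, add_comm])

/-- The points at which every polynomial of degree less than `s` vanishing on `T` vanishes. -/
noncomputable def polyClosure {m : ℕ} (s : ℕ) (T : Finset (Cube m)) : Finset (Cube m) :=
  open Classical in
  Finset.univ.filter fun y => ∀ f ∈ polyLT m s, (∀ x ∈ T, f x = 0) → f y = 0

lemma mem_polyClosure {m s : ℕ} {T : Finset (Cube m)} {y : Cube m} :
    y ∈ polyClosure s T ↔ ∀ f ∈ polyLT m s, (∀ x ∈ T, f x = 0) → f y = 0 := by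
  simp [polyClosure]

lemma card_le_of_subset_polyClosure {m s : ℕ} {T T' : Finset (Cube m)} (hT' : Interpolates s T')
    (h : T' ⊆ polyClosure s T) : T'.card ≤ T.card := by
  classical
  have hex : ∀ φ : T' → ZMod 2, ∃ f ∈ polyLT m s, ∀ x : T', f x = φ x := by
    intro φ
    obtain ⟨f, hf, hfx⟩ := hT' fun x => if hx : x ∈ T' then φ ⟨x, hx⟩ else 0
    exact ⟨f, hf, fun x => by rw [hfx x x.2]; simp⟩
  choose F hF hFx using hex
  have hinj : Function.Injective fun φ : T' → ZMod 2 => fun x : T => F φ x := by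
    intro φ ψ hφ
    funext y
    have hz := mem_polyClosure.1 (h y.2) (F φ - F ψ) (sub_mem (hF φ) (hF ψ)) (by
      intro x hx
      have := congrFun hφ ⟨x, hx⟩
      simpa [sub_eq_zero] using this)
    rw [← hFx φ y, ← hFx ψ y]
    simpa [sub_eq_zero] using hz
  have := Fintype.card_le_of_injective _ hinj
  simp only [Fintype.card_fun, ZMod.card, Fintype.card_coe] at this
  exact (Nat.pow_le_pow_iff_right (by norm_num)).1 this

lemma card_polyClosure_lt {n t s : ℕ} {T : Finset (Cube (n + t))} (h : T.card < binomLT n s) :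
    (polyClosure s T).card < 2 ^ n := by
  by_contra! hle
  obtain ⟨T', hT', hi, hc⟩ := exists_interpolates_subset s (polyClosure s T)
  have h1 := lowDigitCount_mono s hle
  rw [lowDigitCount_two_pow] at h1
  have := card_le_of_subset_polyClosure hi hT'
  omega

/-- The nontrivial real character of `F₂`. -/
def sgn (a : ZMod 2) : ℝ := if a = 0 then 1 else -1

@[simp] lemma sgn_zero : sgn 0 = 1 := by simp [sgn]

@[simp] lemma sgn_one : sgn 1 = -1 := by simp [sgn]

lemma sgn_add (a b : ZMod 2) : sgn (a + b) = sgn a * sgn b := by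
  have h : (1 : ZMod 2) + 1 = 0 := by decide
  rcases zmod_two_cases a with rfl | rfl <;> rcases zmod_two_cases b with rfl | rfl <;>
    simp [h]

lemma sgn_sum {ι : Type*} (t : Finset ι) (f : ι → ZMod 2) :
    sgn (∑ i ∈ t, f i) = ∏ i ∈ t, sgn (f i) := by
  classical
  induction t using Finset.induction_on with
  | empty => simp
  | insert a t ha ih => rw [Finset.sum_insert ha, Finset.prod_insert ha, sgn_add, ih]

/-- The finite set of polynomial functions of degree less than `s`. -/
noncomputable def polys (m s : ℕ) : Finset (Cube m → ZMod 2) :=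
  open Classical in Finset.univ.filter fun f => f ∈ polyLT m s

@[simp] lemma mem_polys {m s : ℕ} {f : Cube m → ZMod 2} : f ∈ polys m s ↔ f ∈ polyLT m s := by
  simp [polys]

lemma card_polys (m s : ℕ) : (polys m s).card = 2 ^ binomLT m s := by
  rw [← card_polyLT]
  exact (Nat.subtype_card (polys m s) fun f => mem_polys).symm

/-- The normalized sum of the signs of a function. -/
noncomputable def bias {m : ℕ} (f : Cube m → ZMod 2) : ℝ := (∑ x, sgn (f x)) / 2 ^ m

/-- Tuples of points whose evaluation vectors sum to zero. -/
def SumsToZero {m w : ℕ} (s : ℕ) (x : Fin w → Cube m) : Prop :=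
  ∀ f ∈ polyLT m s, ∑ i, f (x i) = 0

open Classical in
lemma sum_sgn_polys {m w : ℕ} (s : ℕ) (x : Fin w → Cube m) :
    ∑ f ∈ polys m s, sgn (∑ i, f (x i)) =
      if SumsToZero s x then (2 : ℝ) ^ binomLT m s else 0 := by
  split_ifs with h
  · rw [Finset.sum_congr rfl (g := fun _ => (1 : ℝ)) fun f hf => by
      rw [h f (mem_polys.1 hf), sgn_zero]]
    simp [card_polys]
  · simp only [SumsToZero, not_forall] at h
    obtain ⟨g, hg, hne⟩ := h
    have hg1 := (ne_zero_iff_one _).1 hne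
    have hshift : ∑ f ∈ polys m s, sgn (∑ i, f (x i)) =
        ∑ f ∈ polys m s, sgn (∑ i, (f + g) (x i)) := by
      refine Finset.sum_nbij' (fun f => f + g) (fun f => f + g) ?_ ?_ ?_ ?_ ?_
      · intro f hf
        exact mem_polys.2 (add_mem (mem_polys.1 hf) hg)
      · intro f hf
        exact mem_polys.2 (add_mem (mem_polys.1 hf) hg)
      · intro f _
        rw [add_assoc, add_self_zmod, add_zero]
      · intro f _
        rw [add_assoc, add_self_zmod, add_zero]
      · intro f _
        rw [add_assoc, add_self_zmod, add_zero]
    have hneg : ∑ f ∈ polys m s, sgn (∑ i, (f + g) (x i)) =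
        -∑ f ∈ polys m s, sgn (∑ i, f (x i)) := by
      rw [← Finset.sum_neg_distrib]
      refine Finset.sum_congr rfl fun f _ => ?_
      simp only [Pi.add_apply, Finset.sum_add_distrib]
      rw [sgn_add, hg1, sgn_one, mul_neg_one]
    linarith

open Classical in
lemma sum_bias_pow (m s w : ℕ) :
    ∑ f ∈ polys m s, bias f ^ w = 2 ^ binomLT m s *
      ((Finset.univ.filter fun x : Fin w → Cube m => SumsToZero s x).card : ℝ) / 2 ^ (m * w) := by
  have h : ∀ f : Cube m → ZMod 2,
      bias f ^ w = (∑ x : Fin w → Cube m, sgn (∑ i, f (x i))) / 2 ^ (m * w) := by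
    intro f
    rw [bias, div_pow, ← pow_mul, Fintype.sum_pow]
    congr 1
    exact Finset.sum_congr rfl fun x _ => (sgn_sum _ _).symm
  simp_rw [h]
  rw [← Finset.sum_div, Finset.sum_comm]
  simp_rw [sum_sgn_polys]
  rw [← Finset.sum_filter, Finset.sum_const, nsmul_eq_mul, mul_comm]

/-- The points `u i`, `i ∈ I`, are distinct and can be interpolated. -/
def InterpolatesOn {n w : ℕ} (s : ℕ) (u : Fin w → Cube n) (I : Finset (Fin w)) : Prop :=
  ∀ φ : Fin w → ZMod 2, ∃ h ∈ polyLT n s, ∀ i ∈ I, h (u i) = φ i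

lemma exists_interpolatesOn {n w : ℕ} (s : ℕ) (u : Fin w → Cube n) :
    ∃ I, InterpolatesOn s u I ∧ ∀ i, u i ∈ polyClosure s (I.image u) := by
  classical
  obtain ⟨I, hI, hmax⟩ := Finset.exists_max_image
    (Finset.univ.filter fun I : Finset (Fin w) => InterpolatesOn s u I) Finset.card
    ⟨∅, Finset.mem_filter.2 ⟨Finset.mem_univ _, fun φ => ⟨0, zero_mem _, by simp⟩⟩⟩
  replace hI := (Finset.mem_filter.1 hI).2
  refine ⟨I, hI, fun i => ?_⟩
  rw [mem_polyClosure]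
  intro f hf hfI
  by_contra hne
  have hf1 := (ne_zero_iff_one _).1 hne
  have hfI' : ∀ j ∈ I, f (u j) = 0 := fun j hj => hfI _ (Finset.mem_image_of_mem _ hj)
  have hiI : i ∉ I := fun hi => hne (hfI' i hi)
  have hins : InterpolatesOn s u (insert i I) := by
    intro φ
    obtain ⟨h, hh, hhI⟩ := hI φ
    refine ⟨h + (φ i - h (u i)) • f, add_mem hh ((polyLT n s).smul_mem _ hf), ?_⟩
    intro j hj
    rcases Finset.mem_insert.1 hj with rfl | hj
    · simp [hf1]
    · simp [hfI' j hj, hhI j hj]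
  have := hmax _ (Finset.mem_filter.2 ⟨Finset.mem_univ _, hins⟩)
  rw [Finset.card_insert_of_notMem hiI] at this
  omega

/-- Vectors orthogonal to all evaluations of polynomials along the tuple `u`. -/
def Orthogonal {n w : ℕ} (s : ℕ) (u : Fin w → Cube n) (a : Fin w → ZMod 2) : Prop :=
  ∀ h ∈ polyLT n s, ∑ i, a i * h (u i) = 0

open Classical in
lemma card_orthogonal_le {n w s : ℕ} {u : Fin w → Cube n} {I : Finset (Fin w)}
    (hI : InterpolatesOn s u I) :
    (Finset.univ.filter fun a : Fin w → ZMod 2 => Orthogonal s u a).card ≤ 2 ^ (w - I.card) := by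
  have hcard : Fintype.card ({i // i ∉ I} → ZMod 2) = 2 ^ (w - I.card) := by
    rw [Fintype.card_fun, ZMod.card, Fintype.card_subtype_compl, Fintype.card_fin,
      Fintype.card_coe]
  rw [← hcard, ← Fintype.card_coe]
  refine Fintype.card_le_of_injective (fun a => fun i : {i // i ∉ I} => a.1 i) ?_
  intro a b hab
  have ha := (Finset.mem_filter.1 a.2).2
  have hb := (Finset.mem_filter.1 b.2).2
  have hout : ∀ i, i ∉ I → a.1 i = b.1 i := fun i hi => congrFun hab ⟨i, hi⟩
  apply Subtype.ext
  funext j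
  by_cases hj : j ∈ I
  · obtain ⟨h, hh, hhI⟩ := hI (Pi.single j 1)
    have h1 := ha h hh
    have h2 := hb h hh
    have h3 : ∑ i, (a.1 i - b.1 i) * h (u i) = 0 := by
      simp_rw [sub_mul]
      rw [Finset.sum_sub_distrib, h1, h2, sub_zero]
    rw [Finset.sum_eq_single j] at h3
    · rw [hhI j hj, Pi.single_eq_same, mul_one] at h3
      exact sub_eq_zero.1 h3
    · intro i _ hij
      by_cases hi : i ∈ I
      · rw [hhI i hi, Pi.single_eq_of_ne hij, mul_zero]
      · rw [hout i hi, sub_self, zero_mul]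
    · simp
  · exact hout j hj

open Classical in
lemma card_covered_le {n t s w : ℕ} (I : Finset (Fin w)) (hI : I.card < binomLT n s) :
    (Finset.univ.filter fun u : Fin w → Cube (n + t) =>
      ∀ i, u i ∈ polyClosure s (I.image u)).card ≤
        2 ^ ((n + t) * I.card) * 2 ^ (n * (w - I.card)) := by
  have hcard : (Finset.univ.filter fun u : Fin w → Cube (n + t) =>
      ∀ i, u i ∈ polyClosure s (I.image u)).card ≤
      ((Finset.univ : Finset ({i // i ∈ I} → Cube (n + t))).sigma fun p =>
        Fintype.piFinset fun _ : {i // i ∉ I} => polyClosure s (Finset.univ.image p)).card := by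
    refine Finset.card_le_card_of_injOn
      (fun u => ⟨fun i => u i.1, fun i => u i.1⟩) ?_ ?_
    · intro u hu
      have hu' := (Finset.mem_filter.1 hu).2
      refine Finset.mem_coe.2 (Finset.mem_sigma.2 ⟨Finset.mem_univ _, ?_⟩)
      rw [Fintype.mem_piFinset]
      intro i
      have himg : I.image u = Finset.univ.image fun j : {i // i ∈ I} => u j.1 := by
        ext y
        simp
      rw [← himg]
      exact hu' i
    · intro u _ v _ huv
      simp only [Sigma.mk.injEq, heq_eq_eq] at huv
      funext i
      by_cases hi : i ∈ I
      · exact congrFun huv.1 ⟨i, hi⟩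
      · exact congrFun huv.2 ⟨i, hi⟩
  refine hcard.trans ?_
  rw [Finset.card_sigma]
  have hle : ∀ p : {i // i ∈ I} → Cube (n + t),
      (Fintype.piFinset fun _ : {i // i ∉ I} => polyClosure s (Finset.univ.image p)).card ≤
        2 ^ (n * (w - I.card)) := by
    intro p
    rw [Fintype.card_piFinset, Finset.prod_const, Finset.card_univ, Fintype.card_subtype_compl,
      Fintype.card_fin, Fintype.card_coe, pow_mul]
    refine Nat.pow_le_pow_left (card_polyClosure_lt ?_).le _
    refine lt_of_le_of_lt Finset.card_image_le ?_
    simpa using hI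
  refine (Finset.sum_le_card_nsmul _ _ _ fun p _ => hle p).trans ?_
  rw [smul_eq_mul]
  refine Nat.mul_le_mul_right _ ?_
  rw [Finset.card_univ, Fintype.card_fun, Fintype.card_fun, ZMod.card, Fintype.card_fin,
    Fintype.card_coe, pow_mul]

open Classical in
/-- Tuples with few interpolation points are rare. -/
lemma card_low_rank_le {n t s w R : ℕ} (hR : R ≤ binomLT n s) (hRw : R ≤ w) :
    (Finset.univ.filter fun u : Fin w → Cube (n + t) =>
      ∃ I : Finset (Fin w), I.card < R ∧ ∀ i, u i ∈ polyClosure s (I.image u)).card *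
        2 ^ (t * (w - R)) ≤ 2 ^ w * 2 ^ ((n + t) * w) := by
  have hsub : (Finset.univ.filter fun u : Fin w → Cube (n + t) =>
      ∃ I : Finset (Fin w), I.card < R ∧ ∀ i, u i ∈ polyClosure s (I.image u)) ⊆
      (Finset.univ.filter fun I : Finset (Fin w) => I.card < R).biUnion fun I =>
        Finset.univ.filter fun u : Fin w → Cube (n + t) =>
          ∀ i, u i ∈ polyClosure s (I.image u) := by
    intro u hu
    obtain ⟨I, h1, h2⟩ := (Finset.mem_filter.1 hu).2
    simp only [Finset.mem_biUnion, Finset.mem_filter, Finset.mem_univ, true_and]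
    exact ⟨I, h1, h2⟩
  refine (Nat.mul_le_mul_right _ ((Finset.card_le_card hsub).trans
    Finset.card_biUnion_le)).trans ?_
  rw [Finset.sum_mul]
  have hle : ∀ I ∈ Finset.univ.filter (fun I : Finset (Fin w) => I.card < R),
      (Finset.univ.filter fun u : Fin w → Cube (n + t) =>
        ∀ i, u i ∈ polyClosure s (I.image u)).card * 2 ^ (t * (w - R)) ≤
        2 ^ ((n + t) * w) := by
    intro I hI
    replace hI := (Finset.mem_filter.1 hI).2
    refine (Nat.mul_le_mul (card_covered_le I (hI.trans_le hR))
      (Nat.pow_le_pow_right (by norm_num)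
        (Nat.mul_le_mul_left t (show w - R ≤ w - I.card by omega)))).trans (le_of_eq ?_)
    rw [← pow_add, ← pow_add]
    congr 1
    obtain ⟨d, hd⟩ : ∃ d, w = I.card + d := ⟨w - I.card, by omega⟩
    rw [show w - I.card = d by omega]
    calc _ = (n + t) * (I.card + d) := by ring
      _ = _ := by rw [← hd]
  refine (Finset.sum_le_card_nsmul _ _ _ hle).trans ?_
  rw [smul_eq_mul]
  refine Nat.mul_le_mul_right _ ((Finset.card_le_univ _).trans ?_)
  simp

lemma coord_mul_mem_polyLT {n J s : ℕ} (j : Fin J) {h : Cube n → ZMod 2} (hh : h ∈ polyLT n s) :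
    (fun x : Cube (n + J) => x (Fin.natAdd n j) * h fun k => x (Fin.castAdd J k)) ∈
      polyLT (n + J) (s + 1) := by
  rcases s with _ | s
  · have : h = 0 := by simpa using hh
    subst this
    convert zero_mem (polyLT (n + J) (0 + 1)) using 1
    funext x
    simp
  · have h1 : (fun x : Cube (n + J) => h fun k => x (Fin.castAdd J k)) ∈
        polyLT (n + J) (s + 1) :=
      comp_mem_polyLT (L := fun x k => x (Fin.castAdd J k)) hh fun k => coord_mem_polyLT _
    have h2 := mul_mem_polyLT (coord_mem_polyLT (Fin.natAdd n j)) h1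
    rwa [show 1 + s + 1 = s + 1 + 1 by ring] at h2

open Classical in
/-- The count of vanishing sums, in terms of the ranks of the projected points. -/
lemma card_sumsToZero_le {n J s w : ℕ} :
    (Finset.univ.filter fun x : Fin w → Cube (n + J) => SumsToZero (s + 1) x).card ≤
      ∑ u : Fin w → Cube n,
        (Finset.univ.filter fun a : Fin w → ZMod 2 => Orthogonal s u a).card ^ J := by
  have hcard : (Finset.univ.filter fun x : Fin w → Cube (n + J) => SumsToZero (s + 1) x).card ≤
      ((Finset.univ : Finset (Fin w → Cube n)).sigma fun u =>
        Fintype.piFinset fun _ : Fin J =>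
          Finset.univ.filter fun a : Fin w → ZMod 2 => Orthogonal s u a).card := by
    refine Finset.card_le_card_of_injOn
      (fun x => ⟨fun i k => x i (Fin.castAdd J k), fun j i => x i (Fin.natAdd n j)⟩) ?_ ?_
    · intro x hx
      have hx' := (Finset.mem_filter.1 hx).2
      refine Finset.mem_coe.2 (Finset.mem_sigma.2 ⟨Finset.mem_univ _, ?_⟩)
      rw [Fintype.mem_piFinset]
      intro j
      refine Finset.mem_filter.2 ⟨Finset.mem_univ _, fun h hh => ?_⟩
      exact hx' _ (coord_mul_mem_polyLT j hh)
    · intro x _ y _ hxy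
      simp only [Sigma.mk.injEq, heq_eq_eq] at hxy
      funext i k
      refine Fin.addCases (fun k => ?_) (fun j => ?_) k
      · exact congrFun (congrFun hxy.1 i) k
      · exact congrFun (congrFun hxy.2 j) i
  refine hcard.trans (le_of_eq ?_)
  rw [Finset.card_sigma]
  exact Finset.sum_congr rfl fun u _ => by rw [Fintype.card_piFinset_const]

open Classical in
lemma card_sumsToZero_le_of_rank {n t J s w R : ℕ} (hR : R ≤ binomLT n s) (hRw : R ≤ w) :
    ((Finset.univ.filter fun x : Fin w → Cube (n + t + J) => SumsToZero (s + 1) x).card : ℝ) ≤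
      2 ^ ((n + t + J) * w) * (1 / 2 ^ (R * J) + 2 ^ w / 2 ^ (t * (w - R))) := by
  set bad := Finset.univ.filter fun u : Fin w → Cube (n + t) =>
      ∃ I : Finset (Fin w), I.card < R ∧ ∀ i, u i ∈ polyClosure s (I.image u) with hbad
  have hpoint : ∀ u : Fin w → Cube (n + t),
      (Finset.univ.filter fun a : Fin w → ZMod 2 => Orthogonal s u a).card ^ J ≤
        2 ^ ((w - R) * J) + if u ∈ bad then 2 ^ (w * J) else 0 := by
    intro u
    obtain ⟨I, hI, hcl⟩ := exists_interpolatesOn s u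
    by_cases h : I.card < R
    · have hu : u ∈ bad := by
        rw [hbad, Finset.mem_filter]
        exact ⟨Finset.mem_univ _, I, h, hcl⟩
      rw [if_pos hu, pow_mul 2 w]
      refine (Nat.pow_le_pow_left ((Finset.card_le_univ _).trans ?_) J).trans
        (Nat.le_add_left _ _)
      simp
    · refine le_trans ?_ (Nat.le_add_right _ _)
      rw [pow_mul]
      exact Nat.pow_le_pow_left ((card_orthogonal_le hI).trans
        (Nat.pow_le_pow_right (by norm_num) (by omega))) J
  have h1 := (card_sumsToZero_le (n := n + t) (J := J) (s := s) (w := w)).trans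
    (Finset.sum_le_sum fun u _ => hpoint u)
  rw [Finset.sum_add_distrib, Finset.sum_const, ← Finset.sum_filter, Finset.sum_const,
    Finset.filter_mem_eq_inter, Finset.univ_inter, Finset.card_univ, Fintype.card_fun,
    Fintype.card_fun, ZMod.card, Fintype.card_fin, Fintype.card_fin, smul_eq_mul, smul_eq_mul] at h1
  have h2 := card_low_rank_le (t := t) hR hRw
  rw [← hbad] at h2
  have h1' : ((Finset.univ.filter fun x : Fin w → Cube (n + t + J) =>
      SumsToZero (s + 1) x).card : ℝ) ≤
      ((2 : ℝ) ^ (n + t)) ^ w * 2 ^ ((w - R) * J) + bad.card * 2 ^ (w * J) := by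
    exact_mod_cast h1
  have h2' : (bad.card : ℝ) * 2 ^ (t * (w - R)) ≤ 2 ^ w * 2 ^ ((n + t) * w) := by
    exact_mod_cast h2
  rw [← le_div_iff₀ (by positivity)] at h2'
  refine h1'.trans ?_
  rw [mul_add]
  refine add_le_add (le_of_eq ?_) ?_
  · rw [mul_one_div, eq_div_iff (by positivity), ← pow_mul, ← pow_add, ← pow_add]
    congr 1
    obtain ⟨d, rfl⟩ : ∃ d, w = R + d := ⟨w - R, by omega⟩
    rw [Nat.add_sub_cancel_left]
    ring
  · refine (mul_le_mul_of_nonneg_right h2' (by positivity)).trans (le_of_eq ?_)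
    rw [show (n + t + J) * w = (n + t) * w + w * J by ring, pow_add]
    ring

open Classical in
/-- Polynomials of large bias are rare. -/
lemma card_bias_ge_le {n s l B : ℕ} (hB : 1 ≤ B) :
    (((polys (n + (4 * l + 2) + 4 * l * B) (s + 1)).filter
      fun f => (1 / 2 : ℝ) ^ l ≤ bias f).card : ℝ) * 2 ^ (2 * l * B * binomLT n s) ≤
      2 * 2 ^ binomLT (n + (4 * l + 2) + 4 * l * B) (s + 1) := by
  set R := binomLT n s with hR
  set m := n + (4 * l + 2) + 4 * l * B with hm
  set w := 2 * (B * R) with hw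
  have hRB : R ≤ B * R := Nat.le_mul_of_pos_left R hB
  have hRw : R ≤ w := by omega
  have hq : ((Finset.univ.filter fun x : Fin w → Cube m => SumsToZero (s + 1) x).card : ℝ) /
      2 ^ (m * w) ≤ 2 / 2 ^ (4 * l * B * R) := by
    rw [div_le_iff₀ (by positivity)]
    refine (card_sumsToZero_le_of_rank (t := 4 * l + 2) (J := 4 * l * B) hR.le hRw).trans ?_
    rw [mul_comm]
    refine mul_le_mul_of_nonneg_right ?_ (by positivity)
    have h1 : (1 : ℝ) / 2 ^ (R * (4 * l * B)) = 1 / 2 ^ (4 * l * B * R) := by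
      congr 2; ring
    have h2 : (2 : ℝ) ^ w / 2 ^ ((4 * l + 2) * (w - R)) ≤ 1 / 2 ^ (4 * l * B * R) := by
      rw [div_le_div_iff₀ (by positivity) (by positivity), one_mul, ← pow_add]
      refine pow_le_pow_right₀ (by norm_num) ?_
      have : B * R ≤ w - R := by omega
      calc w + 4 * l * B * R = (4 * l + 2) * (B * R) := by rw [hw]; ring
        _ ≤ _ := Nat.mul_le_mul_left _ this
    rw [h1]
    calc _ ≤ (1 : ℝ) / 2 ^ (4 * l * B * R) + 1 / 2 ^ (4 * l * B * R) := by gcongr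
      _ = _ := by ring
  have hmark : (((polys m (s + 1)).filter fun f => (1 / 2 : ℝ) ^ l ≤ bias f).card : ℝ) *
      ((1 / 2 : ℝ) ^ l) ^ w ≤ ∑ f ∈ polys m (s + 1), bias f ^ w := by
    rw [← nsmul_eq_mul]
    refine (Finset.card_nsmul_le_sum _ (fun f => bias f ^ w) _ ?_).trans ?_
    · intro f hf
      exact pow_le_pow_left₀ (by positivity) (Finset.mem_filter.1 hf).2 _
    · refine Finset.sum_le_sum_of_subset_of_nonneg (Finset.filter_subset _ _) ?_
      intro f _ _
      exact (even_two_mul (B * R)).pow_nonneg _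
  rw [sum_bias_pow, mul_div_assoc] at hmark
  have h3 := hmark.trans (mul_le_mul_of_nonneg_left hq (by positivity))
  have h4 : ((1 / 2 : ℝ) ^ l) ^ w = 1 / 2 ^ (2 * l * B * R) := by
    rw [← pow_mul, one_div_pow, hw]
    congr 2; ring
  have h5 : (2 : ℝ) ^ (4 * l * B * R) = 2 ^ (2 * l * B * R) * 2 ^ (2 * l * B * R) := by
    rw [← pow_add]; congr 1; ring
  rw [h4, h5, mul_one_div, div_le_iff₀ (by positivity)] at h3
  calc _ ≤ _ := mul_le_mul_of_nonneg_right h3 (by positivity)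
    _ = _ := by field_simp

lemma sum_sq_sum_mul_card {α : Type*} [Fintype α] (g : α → ℝ) (hg : ∑ a, g a = 0) (k : ℕ) :
    (∑ y : Fin k → α, (∑ i, g (y i)) ^ 2) * Fintype.card α =
      k * (Fintype.card α : ℝ) ^ k * ∑ a, g a ^ 2 := by
  induction k with
  | zero => simp
  | succ k ih =>
    have hlin : ∑ y : Fin k → α, ∑ a, 2 * g a * (∑ i, g (y i)) = 0 := by
      refine Finset.sum_eq_zero fun y _ => ?_
      rw [← Finset.sum_mul, ← Finset.mul_sum, hg]
      ring
    have hsum : ∑ y : Fin (k + 1) → α, (∑ i, g (y i)) ^ 2 =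
        (Fintype.card α : ℝ) ^ k * ∑ a, g a ^ 2 +
          Fintype.card α * ∑ y : Fin k → α, (∑ i, g (y i)) ^ 2 := by
      rw [← (Fin.consEquiv (fun _ : Fin (k + 1) => α)).sum_comp, Fintype.sum_prod_type_right]
      have hexp : ∀ (y : Fin k → α) (a : α),
          (∑ i, g ((Fin.consEquiv (fun _ : Fin (k + 1) => α)) (a, y) i)) ^ 2 =
            g a ^ 2 + 2 * g a * (∑ i, g (y i)) + (∑ i, g (y i)) ^ 2 := by
        intro y a
        rw [Fin.sum_univ_succ]
        simp only [Fin.consEquiv_apply, Fin.cons_zero, Fin.cons_succ]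
        ring
      simp_rw [hexp, Finset.sum_add_distrib]
      rw [hlin]
      simp only [Finset.sum_const, Finset.card_univ, Fintype.card_fun, Fintype.card_fin,
        nsmul_eq_mul, add_zero, Nat.cast_pow]
      rw [← Finset.mul_sum]
    rw [hsum, add_mul, mul_assoc _ (∑ y : Fin k → α, _), ih]
    push_cast
    ring

/-- The points where the translates of `f` along `y` do not have a majority of zeros. -/
noncomputable def badPoints {m k : ℕ} (f : Cube m → ZMod 2) (y : Fin k → Cube m) :
    Finset (Cube m) :=
  Finset.univ.filter fun x => ∑ i, sgn (f (x + y i)) ≤ 0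

lemma sgn_sq (a : ZMod 2) : sgn a ^ 2 = 1 := by
  rcases zmod_two_cases a with rfl | rfl <;> simp

lemma card_cube (m : ℕ) : Fintype.card (Cube m) = 2 ^ m := by
  simp [Cube, ZMod.card]

lemma exists_badPoints_le {m k : ℕ} {f : Cube m → ZMod 2} (hk : 0 < k) (hb : 0 < bias f) :
    ∃ y : Fin k → Cube m,
      ((badPoints f y).card : ℝ) * (k * bias f ^ 2) ≤ 2 ^ m * (1 - bias f ^ 2) := by
  set b := bias f with hbdef
  have hbsum : ∑ x, sgn (f x) = 2 ^ m * b := by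
    rw [hbdef, bias]
    field_simp
  have hg : ∑ x, (sgn (f x) - b) = 0 := by
    rw [Finset.sum_sub_distrib, hbsum]
    simp
  have hg2 : ∑ x, (sgn (f x) - b) ^ 2 = 2 ^ m * (1 - b ^ 2) := by
    have : ∀ x, (sgn (f x) - b) ^ 2 = 1 + b ^ 2 - 2 * b * sgn (f x) := by
      intro x
      linear_combination sgn_sq (f x)
    simp_rw [this]
    rw [Finset.sum_sub_distrib, ← Finset.mul_sum, hbsum]
    simp
    ring
  have hvar := sum_sq_sum_mul_card (fun x => sgn (f x) - b) hg k
  rw [hg2, card_cube] at hvar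
  have hbad : ∀ y : Fin k → Cube m, ((badPoints f y).card : ℝ) * (k * b) ^ 2 ≤
      ∑ x, (∑ i, (sgn (f (x + y i)) - b)) ^ 2 := by
    intro y
    rw [← nsmul_eq_mul]
    refine (Finset.card_nsmul_le_sum (badPoints f y)
      (fun x => (∑ i, (sgn (f (x + y i)) - b)) ^ 2) _ ?_).trans ?_
    · intro x hx
      have hx' := (Finset.mem_filter.1 hx).2
      rw [Finset.sum_sub_distrib]
      simp only [Finset.sum_const, Finset.card_univ, Fintype.card_fin, nsmul_eq_mul]
      have : 0 ≤ (k : ℝ) * b := by positivity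
      nlinarith
    · exact Finset.sum_le_sum_of_subset_of_nonneg (Finset.subset_univ _)
        fun _ _ _ => sq_nonneg _
  have htotal : ∑ y : Fin k → Cube m, ∑ x, (∑ i, (sgn (f (x + y i)) - b)) ^ 2 =
      k * (2 ^ m) ^ k * (2 ^ m * (1 - b ^ 2)) := by
    rw [Finset.sum_comm]
    have hx : ∀ x : Cube m, ∑ y : Fin k → Cube m, (∑ i, (sgn (f (x + y i)) - b)) ^ 2 =
        ∑ y : Fin k → Cube m, (∑ i, (sgn (f (y i)) - b)) ^ 2 := by
      intro x
      exact Equiv.sum_comp (Equiv.addLeft (fun _ : Fin k => x))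
        fun y : Fin k → Cube m => (∑ i, (sgn (f (y i)) - b)) ^ 2
    simp_rw [hx]
    rw [Finset.sum_const, Finset.card_univ, card_cube, nsmul_eq_mul, mul_comm, hvar]
    push_cast
    ring
  have hex : ∃ y ∈ (Finset.univ : Finset (Fin k → Cube m)),
      ((badPoints f y).card : ℝ) * (k * b) ^ 2 ≤ k * (2 ^ m * (1 - b ^ 2)) := by
    refine Finset.exists_le_of_sum_le Finset.univ_nonempty ?_
    refine (Finset.sum_le_sum fun y _ => hbad y).trans (le_of_eq ?_)
    rw [htotal, Finset.sum_const, Finset.card_univ, Fintype.card_fun, card_cube, Fintype.card_fin,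
      nsmul_eq_mul]
    push_cast
    ring
  obtain ⟨y, -, hy⟩ := hex
  refine ⟨y, ?_⟩
  have hk' : (0 : ℝ) < k := by exact_mod_cast hk
  refine le_of_mul_le_mul_left (le_trans (le_of_eq ?_) hy) hk'
  ring

/-- The derivative of `f` in direction `y`. -/
def deriv {m : ℕ} (y : Cube m) (f : Cube m → ZMod 2) : Cube m → ZMod 2 :=
  fun x => f x + f (x + y)

lemma eq_of_deriv_eq {m k : ℕ} {f g : Cube m → ZMod 2} {y : Fin k → Cube m}
    (h : ∀ i, deriv (y i) f = deriv (y i) g) {x : Cube m} (hf : x ∉ badPoints f y)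
    (hg : x ∉ badPoints g y) : f x = g x := by
  simp only [badPoints, Finset.mem_filter, Finset.mem_univ, true_and, not_le] at hf hg
  have hsum : sgn (f x) * ∑ i, sgn (f (x + y i)) = sgn (g x) * ∑ i, sgn (g (x + y i)) := by
    rw [Finset.mul_sum, Finset.mul_sum]
    refine Finset.sum_congr rfl fun i _ => ?_
    rw [← sgn_add, ← sgn_add]
    exact congrArg sgn (congrFun (h i) x)
  rcases zmod_two_cases (f x) with h1 | h1 <;> rcases zmod_two_cases (g x) with h2 | h2 <;>
    rw [h1, h2] at hsum ⊢ <;> simp only [sgn_zero, sgn_one] at hsum <;> linarith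

lemma weight_add_le_of_deriv_eq {m k : ℕ} {f g : Cube m → ZMod 2} {y : Fin k → Cube m}
    (h : ∀ i, deriv (y i) f = deriv (y i) g) :
    weight (f + g) ≤ (badPoints f y).card + (badPoints g y).card := by
  refine (Finset.card_le_card ?_).trans (Finset.card_union_le _ _)
  intro x hx
  have hx' := (Finset.mem_filter.1 hx).2
  by_contra hn
  rw [Finset.mem_union, not_or] at hn
  refine hx' ?_
  rw [Pi.add_apply, eq_of_deriv_eq h hn.1 hn.2]
  exact CharTwo.add_self_eq_zero _

/-- Polynomials of degree less than `s` and relative weight at most `2⁻ᵏ`. -/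
noncomputable def lowWeight (m s k : ℕ) : Finset (Cube m → ZMod 2) :=
  (polys m s).filter fun f => weight f * 2 ^ k ≤ 2 ^ m

lemma mem_lowWeight {m s k : ℕ} {f : Cube m → ZMod 2} :
    f ∈ lowWeight m s k ↔ f ∈ polyLT m s ∧ weight f * 2 ^ k ≤ 2 ^ m := by
  simp [lowWeight]

/-- A family of polynomials is determined by few derivatives up to a low-weight error. -/
lemma card_le_of_deriv_mem {m s k c : ℕ} {S U : Finset (Cube m → ZMod 2)}
    (hS : ∀ f ∈ S, f ∈ polyLT m s) (hU : ∀ f ∈ S, ∀ y, deriv y f ∈ U)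
    (hbad : ∀ f ∈ S, ∃ y : Fin c → Cube m, (badPoints f y).card * 2 * 2 ^ k ≤ 2 ^ m) :
    S.card ≤ (lowWeight m s k).card * ((2 ^ m) ^ c * U.card ^ c) := by
  classical
  choose! y hy using hbad
  have hcard : ((Finset.univ : Finset (Fin c → Cube m)) ×ˢ
      Fintype.piFinset fun _ : Fin c => U).card = (2 ^ m) ^ c * U.card ^ c := by
    rw [Finset.card_product, Fintype.card_piFinset_const, Finset.card_univ, Fintype.card_fun,
      card_cube, Fintype.card_fin]
  rw [← hcard]
  refine Finset.card_le_mul_card_image_of_maps_to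
    (f := fun f => (y f, fun i => deriv (y f i) f)) ?_ _ ?_
  · intro f hf
    refine Finset.mem_product.2 ⟨Finset.mem_univ _, ?_⟩
    rw [Fintype.mem_piFinset]
    exact fun i => hU f hf _
  · intro b _
    rcases Finset.eq_empty_or_nonempty
      (S.filter fun f => (y f, fun i => deriv (y f i) f) = b) with he | ⟨g, hg⟩
    · rw [he]
      simp
    · obtain ⟨hgS, hgb⟩ := Finset.mem_filter.1 hg
      refine Finset.card_le_card_of_injOn (fun f => f + g) ?_ ?_
      · intro f hf
        obtain ⟨hfS, hfb⟩ := Finset.mem_filter.1 hf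
        rw [← hgb, Prod.mk.injEq] at hfb
        refine Finset.mem_coe.2 (mem_lowWeight.2 ⟨add_mem (hS f hfS) (hS g hgS), ?_⟩)
        have h1 : weight (f + g) ≤ (badPoints f (y f)).card + (badPoints g (y g)).card := by
          have h2 := hfb.2
          rw [hfb.1] at h2 ⊢
          exact weight_add_le_of_deriv_eq fun i => congrFun h2 i
        have hf' := hy f hfS
        have hg' := hy g hgS
        calc _ ≤ ((badPoints f (y f)).card + (badPoints g (y g)).card) * 2 ^ k :=
              Nat.mul_le_mul_right _ h1
          _ ≤ _ := by nlinarith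
      · intro a _ b _ hab
        exact add_right_cancel hab

lemma bias_eq {m : ℕ} (f : Cube m → ZMod 2) : bias f = 1 - 2 * weight f / 2 ^ m := by
  have h : ∀ x, sgn (f x) = 1 - 2 * if f x ≠ 0 then 1 else 0 := by
    intro x
    rcases zmod_two_cases (f x) with h | h <;> rw [h] <;> norm_num
  rw [bias, weight, Finset.card_filter]
  simp_rw [h]
  rw [Finset.sum_sub_distrib, ← Finset.mul_sum]
  simp only [Finset.sum_const, Finset.card_univ, card_cube, nsmul_eq_mul]
  push_cast
  field_simp

lemma weight_deriv_le {m : ℕ} (f : Cube m → ZMod 2) (y : Cube m) :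
    weight (deriv y f) ≤ weight f + weight f := by
  have h : weight f = (Finset.univ.filter fun x => f (x + y) ≠ 0).card := by
    rw [weight, Finset.card_filter, Finset.card_filter]
    exact (Equiv.sum_comp (Equiv.addRight y) fun x => if f x ≠ 0 then 1 else 0).symm
  nth_rewrite 2 [h]
  refine (Finset.card_le_card ?_).trans (Finset.card_union_le _ _)
  intro x hx
  have hx' := (Finset.mem_filter.1 hx).2
  simp only [Finset.mem_union, Finset.mem_filter, Finset.mem_univ, true_and]
  by_contra! hn
  exact hx' (by simp [deriv, hn.1, hn.2])

lemma card_lowWeight_succ_le {m s k : ℕ} (hk : 3 ≤ k) :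
    (lowWeight m (s + 1) (k + 1)).card ≤ (lowWeight m (s + 1) (k + 2)).card *
      ((2 ^ m) ^ 32 * (lowWeight m s k).card ^ 32) := by
  refine card_le_of_deriv_mem (fun f hf => (mem_lowWeight.1 hf).1) ?_ ?_
  · intro f hf y
    obtain ⟨h1, h2⟩ := mem_lowWeight.1 hf
    refine mem_lowWeight.2 ⟨deriv_mem_polyLT y h1, ?_⟩
    calc _ ≤ (weight f + weight f) * 2 ^ k := Nat.mul_le_mul_right _ (weight_deriv_le f y)
      _ = weight f * 2 ^ (k + 1) := by ring
      _ ≤ _ := h2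
  · intro f hf
    obtain ⟨-, h2⟩ := mem_lowWeight.1 hf
    have h2' : (weight f : ℝ) * 2 ^ (k + 1) ≤ 2 ^ m := by exact_mod_cast h2
    have hp : (0 : ℝ) < 2 ^ m := by positivity
    have hk8 : (8 : ℝ) ≤ 2 ^ k := by
      calc (8 : ℝ) = 2 ^ 3 := by norm_num
        _ ≤ _ := pow_le_pow_right₀ (by norm_num) hk
    set a : ℝ := 1 - bias f with ha
    have ha0 : 0 ≤ a := by
      rw [ha, bias_eq]
      have : (0 : ℝ) ≤ 2 * weight f / 2 ^ m := by positivity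
      linarith
    have hak : a * 2 ^ k ≤ 1 := by
      rw [ha, bias_eq, sub_sub_cancel, div_mul_eq_mul_div, div_le_one hp]
      calc _ = (weight f : ℝ) * 2 ^ (k + 1) := by ring
        _ ≤ _ := h2'
    have ha8 : a ≤ 1 / 8 := by nlinarith
    have hba : bias f = 1 - a := by rw [ha]; ring
    obtain ⟨y, hy⟩ := exists_badPoints_le (k := 32) (f := f) (by norm_num) (by linarith)
    refine ⟨y, ?_⟩
    rw [hba] at hy
    have hX : (0 : ℝ) ≤ (badPoints f y).card := Nat.cast_nonneg _
    rw [Nat.cast_ofNat] at hy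
    have h24 : 24 ≤ 32 * (1 - a) ^ 2 := by nlinarith
    have h3 : ((badPoints f y).card : ℝ) * 24 ≤ 2 ^ m * (2 * a) := by
      calc _ ≤ ((badPoints f y).card : ℝ) * (32 * (1 - a) ^ 2) :=
            mul_le_mul_of_nonneg_left h24 hX
        _ ≤ _ := hy
        _ ≤ _ := by
          gcongr
          nlinarith [sq_nonneg a]
    have h4 : ((badPoints f y).card : ℝ) * 24 * 2 ^ k ≤ 2 ^ m * 2 := by nlinarith
    have h5 : ((badPoints f y).card : ℝ) * 2 * 2 ^ (k + 2) ≤ 2 ^ m := by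
      rw [pow_add]
      nlinarith
    exact_mod_cast h5

lemma card_lowWeight_le_one {m s k : ℕ} (h : s < k) : (lowWeight m (s + 1) k).card ≤ 1 := by
  refine Finset.card_le_one.2 ?_
  have h0 : ∀ f ∈ lowWeight m (s + 1) k, f = 0 := by
    intro f hf
    obtain ⟨h1, h2⟩ := mem_lowWeight.1 hf
    by_contra hne
    have h3 := two_pow_le_weight h1 hne
    have h4 : weight f * 2 ^ s < weight f * 2 ^ k := by
      refine Nat.mul_lt_mul_of_pos_left (Nat.pow_lt_pow_right (by norm_num) h) ?_
      by_contra h0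
      have : weight f = 0 := by omega
      rw [this] at h3
      simp at h3
    omega
  intro f hf g hg
  rw [h0 f hf, h0 g hg]

lemma card_lowWeight_le (m s k : ℕ) : (lowWeight m s k).card ≤ 2 ^ binomLT m s := by
  rw [← card_polys]
  exact Finset.card_le_card (Finset.filter_subset _ _)

lemma mul_pow_le_binomLT {m r Q : ℕ} (hQ : ∀ t ≤ r, Q * binomLT m t ≤ binomLT m (t + 1))
    (t : ℕ) (ht : t + 1 ≤ r) : m * Q ^ t ≤ binomLT m (t + 2) := by
  induction t with
  | zero =>
    simp [binomLT, Finset.sum_range_succ]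
  | succ t ih =>
    calc m * Q ^ (t + 1) = Q * (m * Q ^ t) := by ring
      _ ≤ Q * binomLT m (t + 2) := Nat.mul_le_mul_left _ (ih (by omega))
      _ ≤ _ := hQ _ ht

/-- Few polynomials have low weight. -/
lemma card_lowWeight_pow_le {m r : ℕ}
    (hQ : ∀ t ≤ r, 2 ^ 16 * binomLT m t ≤ binomLT m (t + 1)) :
    ∀ s ≤ r, ∀ k, 4 ≤ k → (lowWeight m (s + 1) k).card ^ 4 ^ k ≤ 2 ^ binomLT m (s + 1) := by
  intro s
  induction s with
  | zero =>
    intro _ k hk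
    exact (Nat.pow_le_one_iff (by positivity)).2 (card_lowWeight_le_one (by omega)) |>.trans
      Nat.one_le_two_pow
  | succ s ih =>
    intro hs k hk
    induction hd : s + 2 - k generalizing k with
    | zero =>
      exact (Nat.pow_le_one_iff (by positivity)).2 (card_lowWeight_le_one (by omega)) |>.trans
        Nat.one_le_two_pow
    | succ d ihd =>
      obtain ⟨j, rfl⟩ : ∃ j, k = j + 1 := ⟨k - 1, by omega⟩
      have hnext := ihd (j + 2) (by omega) (by omega)
      have hrec := card_lowWeight_succ_le (m := m) (s := s + 1) (k := j) (by omega)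
      have hQs := hQ _ hs
      have hsmall : 2 * 4 ^ (j + 5) * m ≤ binomLT m (s + 1 + 1) := by
        refine le_trans ?_ (mul_pow_le_binomLT hQ s hs)
        rw [mul_comm]
        refine Nat.mul_le_mul_left _ ?_
        rw [show (4 : ℕ) = 2 ^ 2 by norm_num, ← pow_mul, ← pow_mul, ← pow_succ']
        exact Nat.pow_le_pow_right (by norm_num) (by omega)
      have hprev : (lowWeight m (s + 1) j).card ^ 4 ^ (j + 2) ≤
          2 ^ (2 ^ 10 * binomLT m (s + 1)) := by
        rcases Nat.lt_or_ge j 4 with hj | hj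
        · obtain rfl : j = 3 := by omega
          rw [mul_comm, pow_mul]
          exact Nat.pow_le_pow_left (card_lowWeight_le _ _ _) _
        · rw [pow_add, pow_mul, mul_comm, pow_mul]
          refine (Nat.pow_le_pow_left (ih (by omega) j hj) _).trans ?_
          exact Nat.pow_le_pow_right (by positivity) (by norm_num)
      have hpow : ((lowWeight m (s + 1 + 1) (j + 1)).card ^ 4 ^ (j + 1)) ^ 4 ≤
          (2 ^ binomLT m (s + 1 + 1)) ^ 4 := by
        calc _ = (lowWeight m (s + 1 + 1) (j + 1)).card ^ 4 ^ (j + 2) := by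
              rw [← pow_mul]; ring_nf
          _ ≤ ((lowWeight m (s + 1 + 1) (j + 2)).card *
                ((2 ^ m) ^ 32 * (lowWeight m (s + 1) j).card ^ 32)) ^ 4 ^ (j + 2) :=
              Nat.pow_le_pow_left hrec _
          _ = (lowWeight m (s + 1 + 1) (j + 2)).card ^ 4 ^ (j + 2) *
                (2 ^ (m * 32 * 4 ^ (j + 2)) *
                  ((lowWeight m (s + 1) j).card ^ 4 ^ (j + 2)) ^ 32) := by
              rw [mul_pow, mul_pow, ← pow_mul, ← pow_mul, ← pow_mul, ← pow_mul, mul_assoc,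
                mul_comm 32 (4 ^ (j + 2))]
          _ ≤ 2 ^ binomLT m (s + 1 + 1) *
                (2 ^ (m * 32 * 4 ^ (j + 2)) * (2 ^ (2 ^ 10 * binomLT m (s + 1))) ^ 32) := by
              gcongr
          _ = 2 ^ (binomLT m (s + 1 + 1) + (m * 32 * 4 ^ (j + 2) +
                2 ^ 10 * binomLT m (s + 1) * 32)) := by
              rw [← pow_mul, ← pow_add, ← pow_add]
          _ ≤ _ := by
              rw [← pow_mul]
              refine Nat.pow_le_pow_right (by norm_num) ?_
              have : m * 32 * 4 ^ (j + 2) ≤ 2 * 4 ^ (j + 5) * m := by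
                rw [show j + 5 = j + 2 + 3 by ring, pow_add 4 (j + 2) 3]
                nlinarith [Nat.zero_le (m * 4 ^ (j + 2))]
              omega
      exact (Nat.pow_le_pow_iff_left (by norm_num)).1 hpow

/-- Few polynomials have bias bounded away from zero. -/
lemma card_bias_pow_le {m r : ℕ} (hr : 1 ≤ r)
    (hQ : ∀ t ≤ r + 1, 2 ^ 100 * binomLT m t ≤ binomLT m (t + 1)) :
    ((polys m (r + 2)).filter fun f => (1 / 2 : ℝ) ^ 40 ≤ bias f).card ^ 128 ≤
      2 ^ binomLT m (r + 2) := by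
  have hkey : ∀ c : ℕ, c = 2 ^ 85 →
      ((polys m (r + 2)).filter fun f => (1 / 2 : ℝ) ^ 40 ≤ bias f).card ≤
        (lowWeight m (r + 2) 4).card * ((2 ^ m) ^ c * (polys m (r + 1)).card ^ c) := by
    intro c hc
    refine card_le_of_deriv_mem (fun f hf => mem_polys.1 (Finset.mem_filter.1 hf).1) ?_ ?_
    · intro f hf y
      exact mem_polys.2 (deriv_mem_polyLT y (mem_polys.1 (Finset.mem_filter.1 hf).1))
    · intro f hf
      have hb := (Finset.mem_filter.1 hf).2
      have hpos : (0 : ℝ) < (1 / 2 : ℝ) ^ 40 := by positivity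
      obtain ⟨y, hy⟩ := exists_badPoints_le (k := c) (f := f) (by rw [hc]; positivity)
        (hpos.trans_le hb)
      refine ⟨y, ?_⟩
      have hb2 : ((1 / 2 : ℝ) ^ 40) ^ 2 ≤ bias f ^ 2 := pow_le_pow_left₀ hpos.le hb 2
      have hc32 : (32 : ℝ) ≤ c * bias f ^ 2 := by
        calc (32 : ℝ) = 2 ^ 85 * ((1 / 2 : ℝ) ^ 40) ^ 2 := by norm_num
          _ ≤ 2 ^ 85 * bias f ^ 2 := by gcongr
          _ = _ := by rw [hc, Nat.cast_pow, Nat.cast_ofNat]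
      have hX : (0 : ℝ) ≤ (badPoints f y).card := by positivity
      have hM : (0 : ℝ) < 2 ^ m := by positivity
      have h1 : ((badPoints f y).card : ℝ) * 32 ≤ 2 ^ m := by
        calc _ ≤ ((badPoints f y).card : ℝ) * (c * bias f ^ 2) := by gcongr
          _ ≤ _ := hy
          _ ≤ _ := by nlinarith [sq_nonneg (bias f)]
      have h2 : (badPoints f y).card * 32 ≤ 2 ^ m := by exact_mod_cast h1
      omega
  generalize hc : 2 ^ 85 = c at hkey
  have h1 := hkey c rfl
  have hlow := card_lowWeight_pow_le (m := m) (r := r + 1)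
    (fun t ht => le_trans (Nat.mul_le_mul_right _ (by norm_num)) (hQ t ht)) (r + 1) le_rfl 4 le_rfl
  have hm : m ≤ binomLT m (r + 1) := by
    obtain ⟨t, rfl⟩ : ∃ t, r = t + 1 := ⟨r - 1, by omega⟩
    refine le_trans ?_ (mul_pow_le_binomLT (Q := 1) (r := t + 1) (fun u hu => ?_) t le_rfl)
    · simp
    · exact le_trans (Nat.mul_le_mul_right _ (by norm_num)) (hQ u (by omega))
  have hQr := hQ _ le_rfl
  have hpow : (((polys m (r + 2)).filter fun f => (1 / 2 : ℝ) ^ 40 ≤ bias f).card ^ 128) ^ 2 ≤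
      (2 ^ binomLT m (r + 2)) ^ 2 := by
    calc _ = ((polys m (r + 2)).filter fun f => (1 / 2 : ℝ) ^ 40 ≤ bias f).card ^ 4 ^ 4 := by
          rw [← pow_mul, show 128 * 2 = 4 ^ 4 by norm_num]
      _ ≤ ((lowWeight m (r + 2) 4).card * ((2 ^ m) ^ c * (polys m (r + 1)).card ^ c)) ^ 4 ^ 4 :=
          Nat.pow_le_pow_left h1 _
      _ = (lowWeight m (r + 2) 4).card ^ 4 ^ 4 *
          2 ^ (m * c * 4 ^ 4 + binomLT m (r + 1) * c * 4 ^ 4) := by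
          rw [mul_pow, mul_pow, card_polys, ← pow_mul, ← pow_mul, ← pow_mul, ← pow_mul, ← pow_add,
            mul_assoc, mul_assoc]
      _ ≤ 2 ^ binomLT m (r + 2) * 2 ^ (m * c * 4 ^ 4 + binomLT m (r + 1) * c * 4 ^ 4) :=
          Nat.mul_le_mul_right _ hlow
      _ ≤ _ := by
          rw [← pow_add, ← pow_mul]
          refine Nat.pow_le_pow_right (by norm_num) ?_
          have h3 : m * c ≤ binomLT m (r + 1) * c := Nat.mul_le_mul_right _ hm
          have h4 : binomLT m (r + 1) * c * 2 ^ 15 ≤ binomLT m (r + 2) := by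
            rw [← hc]
            calc _ = 2 ^ 100 * binomLT m (r + 1) := by ring
              _ ≤ _ := hQr
          omega
  exact (Nat.pow_le_pow_iff_left (by norm_num)).1 hpow

lemma binomLT_succ (m s : ℕ) : binomLT m (s + 1) = binomLT m s + m.choose s :=
  Finset.sum_range_succ _ _

lemma mul_binomLT_succ_le {m r : ℕ} (hrm : r ≤ m) :
    r * binomLT m (r + 1) ≤ 2 * m * binomLT m r := by
  rcases r with _ | r
  · simp
  rw [binomLT_succ, mul_add]
  have h1 : (r + 1) * m.choose (r + 1) ≤ m * m.choose r := by
    rw [mul_comm, Nat.choose_succ_right_eq, mul_comm]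
    exact Nat.mul_le_mul_right _ (Nat.sub_le _ _)
  have h2 : m.choose r ≤ binomLT m (r + 1) := by
    rw [binomLT_succ]
    exact Nat.le_add_left _ _
  nlinarith

lemma binomLT_succ_le {k m r : ℕ} (hr : 8 * r ≤ m) (hk : m ≤ 2 * k) (hm : 0 < m) :
    (binomLT (k + 1) r : ℝ) ≤ Real.exp (4 * r / m) * binomLT k r := by
  rw [binomLT, binomLT, Nat.cast_sum, Nat.cast_sum, Finset.mul_sum]
  refine Finset.sum_le_sum fun i hi => ?_
  have hir : i < r := Finset.mem_range.1 hi
  have hm' : (0 : ℝ) < m := by exact_mod_cast hm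
  have h1 := Nat.choose_mul_succ_eq k i
  have h2 : (k.choose i : ℝ) * (k + 1) = (k + 1).choose i * (k + 1 - i) := by
    rw [← Nat.cast_succ, ← Nat.cast_sub (by omega)]
    exact_mod_cast h1
  have hi' : (i : ℝ) ≤ r := by exact_mod_cast hir.le
  have hr' : (8 : ℝ) * r ≤ m := by exact_mod_cast hr
  have hk' : (m : ℝ) ≤ 2 * k := by exact_mod_cast hk
  have hpos : (0 : ℝ) < k + 1 - i := by linarith
  have h3 : (k + 1 : ℝ) ≤ Real.exp (4 * r / m) * (k + 1 - i) := by
    have h4 := Real.add_one_le_exp (4 * (r : ℝ) / m)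
    have h5 : (i : ℝ) ≤ 4 * r / m * (k + 1 - i) := by
      rw [div_mul_eq_mul_div, le_div_iff₀ hm']
      have : (0 : ℝ) ≤ r := by positivity
      nlinarith
    nlinarith
  refine le_of_mul_le_mul_right ?_ hpos
  rw [← h2]
  have : (0 : ℝ) ≤ k.choose i := by positivity
  nlinarith

lemma binomLT_add_le {n m r : ℕ} (hr : 8 * r ≤ m) (hn : m ≤ 2 * n) (hm : 0 < m) (j : ℕ) :
    (binomLT (n + j) r : ℝ) ≤ Real.exp (4 * r / m * j) * binomLT n r := by
  induction j with
  | zero => simp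
  | succ j ih =>
    refine (binomLT_succ_le (k := n + j) hr (by omega) hm).trans ?_
    calc _ ≤ Real.exp (4 * r / m) * (Real.exp (4 * r / m * j) * binomLT n r) := by gcongr
      _ = _ := by
        rw [← mul_assoc, ← Real.exp_add]
        push_cast
        ring_nf

/-- A quantitative form of the rarity of polynomials with large bias. -/
lemma card_bias_ge_mul_exp_le {m r l : ℕ} (hr : 1 ≤ r) (hm : 2 ^ 102 * r ≤ m) (hl : 41 ≤ l)
    (hlm : 40 * l ≤ m) :
    (((polys m (r + 1)).filter fun f => (1 / 2 : ℝ) ^ l ≤ bias f).card : ℝ) *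
      Real.exp (69 / 2000 * (binomLT m (r + 1) * Real.exp (-(l / 32 : ℝ)))) ≤
        2 * 2 ^ binomLT m (r + 1) := by
  set B := m / (20 * r * l) + 1 with hB
  have hrl : 0 < 20 * r * l := by positivity
  have hB1 : m ≤ 20 * r * l * B := (Nat.lt_mul_div_succ m hrl).le
  have hB2 : 20 * r * (l * B) ≤ m + 20 * r * l := by
    have := Nat.mul_div_le m (20 * r * l)
    rw [hB]
    nlinarith
  have hB3 : 20 * (l * B) ≤ m + 20 * l := by
    have h1 : l * (m / (20 * r * l)) * 20 ≤ m := by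
      calc l * (m / (20 * r * l)) * 20 ≤ l * (m / (20 * r * l)) * 20 * r :=
            Nat.le_mul_of_pos_right _ hr
        _ = (20 * r * l) * (m / (20 * r * l)) := by ring
        _ ≤ m := Nat.mul_div_le _ _
    rw [hB]
    nlinarith
  have hassoc : 4 * l * B = 4 * (l * B) := mul_assoc _ _ _
  obtain ⟨n, hn⟩ : ∃ n, m = n + (4 * l + 2) + 4 * l * B := by
    refine ⟨m - ((4 * l + 2) + 4 * l * B), ?_⟩
    omega
  have hn2 : m ≤ 2 * n := by omega
  have hm0 : 0 < m := by omega
  have hmR : (0 : ℝ) < m := by exact_mod_cast hm0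
  have hrR : (1 : ℝ) ≤ r := by exact_mod_cast hr
  have hlR : (41 : ℝ) ≤ l := by exact_mod_cast hl
  have hgrow := binomLT_add_le (n := n) (m := m) (r := r) (by omega) hn2 hm0
    ((4 * l + 2) + 4 * l * B)
  rw [← add_assoc, ← hn] at hgrow
  have hexp : 4 * (r : ℝ) / m * (((4 * l + 2) + 4 * l * B : ℕ) : ℝ) ≤ l / 32 := by
    rw [div_mul_eq_mul_div, div_le_iff₀ hmR]
    have h1 : (20 : ℝ) * r * (l * B) ≤ m + 20 * r * l := by exact_mod_cast hB2
    have h2 : (2 : ℝ) ^ 102 * r ≤ m := by exact_mod_cast hm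
    have h3 : (10000 : ℝ) * r ≤ m := by
      refine le_trans ?_ h2
      gcongr
      norm_num
    have h4 : (10000 : ℝ) * r * l ≤ m * l := by gcongr
    push_cast
    nlinarith
  have hN : (r : ℝ) * binomLT m (r + 1) ≤ 2 * m * binomLT m r := by
    exact_mod_cast mul_binomLT_succ_le (by omega)
  have hcount := card_bias_ge_le (n := n) (s := r) (l := l) (B := B) (Nat.le_add_left _ _)
  rw [← hn] at hcount
  refine le_trans ?_ hcount
  refine mul_le_mul_of_nonneg_left ?_ (Nat.cast_nonneg _)
  have hlog : Real.exp (69 / 100 * (2 * l * B * binomLT n r : ℕ)) ≤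
      (2 : ℝ) ^ (2 * l * B * binomLT n r) := by
    rw [mul_comm, Real.exp_nat_mul]
    refine pow_le_pow_left₀ (Real.exp_pos _).le ?_ _
    rw [← Real.le_log_iff_exp_le (by norm_num)]
    linarith [Real.log_two_gt_d9]
  refine le_trans (Real.exp_le_exp.2 ?_) hlog
  have hexp' : Real.exp (-(l / 32 : ℝ)) * binomLT m r ≤ binomLT n r := by
    calc _ ≤ Real.exp (-(l / 32 : ℝ)) * (Real.exp (l / 32) * binomLT n r) := by
          gcongr
          exact hgrow.trans (by gcongr)
      _ = _ := by rw [← mul_assoc, ← Real.exp_add]; simp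
  have hB1' : (m : ℝ) ≤ 20 * r * l * B := by exact_mod_cast hB1
  set E := Real.exp (-(l / 32 : ℝ)) with hE
  have hE0 : 0 < E := Real.exp_pos _
  set N : ℝ := (binomLT m (r + 1) : ℝ) with hNdef
  set R : ℝ := (binomLT n r : ℝ) with hRdef
  have hR0 : 0 ≤ R := by positivity
  have h1 : N * E * r ≤ 2 * m * R := by
    calc N * E * r = (r * N) * E := by ring
      _ ≤ (2 * m * binomLT m r) * E := by gcongr
      _ = 2 * m * (E * binomLT m r) := by ring
      _ ≤ _ := by gcongr
  have h2 : N * E * r ≤ (40 * l * B * R) * r := by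
    calc _ ≤ _ := h1
      _ ≤ 2 * (20 * r * l * B) * R := by gcongr
      _ = _ := by ring
  have h3 := le_of_mul_le_mul_right h2 (by linarith)
  push_cast
  linarith

lemma binomLT_le_exp {m r : ℕ} (hrm : r ≤ m) :
    (binomLT m (r + 1) : ℝ) ≤ 256 ^ r * Real.exp (m / 256) := by
  have h1 : (1 / 256 : ℝ) ^ r * binomLT m (r + 1) ≤ (1 / 256 + 1) ^ m := by
    rw [add_pow, binomLT, Nat.cast_sum, Finset.mul_sum]
    refine (Finset.sum_le_sum fun i hi => ?_).trans
      (Finset.sum_le_sum_of_subset_of_nonneg (Finset.range_mono (by omega : r + 1 ≤ m + 1))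
        fun _ _ _ => by positivity)
    rw [one_pow, mul_one]
    refine mul_le_mul_of_nonneg_right ?_ (Nat.cast_nonneg _)
    exact pow_le_pow_of_le_one (by norm_num) (by norm_num) (by simpa [Nat.lt_succ_iff] using hi)
  have h2 : (1 / 256 + 1 : ℝ) ^ m ≤ Real.exp (m / 256) := by
    rw [show (m : ℝ) / 256 = m * (1 / 256) by ring, Real.exp_nat_mul]
    exact pow_le_pow_left₀ (by norm_num) (Real.add_one_le_exp _) _
  rw [one_div_pow, one_div_mul_eq_div, div_le_iff₀ (by positivity)] at h1
  calc _ ≤ _ := h1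
    _ ≤ _ := by rw [mul_comm]; gcongr

lemma le_of_two_pow_le_sq {m r l : ℕ} (hm : 2 ^ 102 * r ≤ m)
    (hl : 2 ^ l ≤ binomLT m (r + 1) ^ 2) : 40 * l ≤ m := by
  have h1 := binomLT_le_exp (m := m) (r := r) (by omega)
  have h2 : (2 : ℝ) ^ l ≤ (256 ^ r * Real.exp (m / 256)) ^ 2 := by
    refine le_trans ?_ (pow_le_pow_left₀ (by positivity) h1 2)
    exact_mod_cast hl
  have h3 := Real.log_le_log (by positivity) h2
  rw [Real.log_pow, Real.log_pow, Real.log_mul (by positivity) (by positivity), Real.log_exp,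
    Real.log_pow, show (256 : ℝ) = 2 ^ 8 by norm_num, Real.log_pow] at h3
  have hm' : (2 : ℝ) ^ 102 * r ≤ m := by exact_mod_cast hm
  have h4 : (10000 : ℝ) * r ≤ m := by
    refine le_trans ?_ hm'
    gcongr
    norm_num
  have hlog1 := Real.log_two_gt_d9
  have hlog2 := Real.log_two_lt_d9
  push_cast at h3
  have hr0 : (0 : ℝ) ≤ r := by positivity
  have hl0 : (0 : ℝ) ≤ l := by positivity
  have h5 : (40 : ℝ) * l ≤ m := by nlinarith
  exact_mod_cast h5

/-- The contribution of polynomials of small bias to the moment of the number of zeros. -/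
lemma sum_level_le {m r l K : ℕ} (hr : 1 ≤ r) (hm : 2 ^ 102 * r ≤ m) (hl : 41 ≤ l)
    (hlN : 2 ^ l ≤ binomLT m (r + 1) ^ 2) (hK : K ≤ binomLT m (r + 1)) :
    ∑ f ∈ (polys m (r + 1)).filter
      (fun f => (1 / 2 : ℝ) ^ l ≤ bias f ∧ bias f ≤ 2 * (1 / 2) ^ l), (1 + bias f) ^ K ≤
      2 * 2 ^ binomLT m (r + 1) * Real.exp (-(3 / 100 * √(binomLT m (r + 1)))) := by
  have hcount := card_bias_ge_mul_exp_le hr hm hl (le_of_two_pow_le_sq hm hlN)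
  set N : ℝ := (binomLT m (r + 1) : ℝ) with hN
  set E := Real.exp (-(l / 32 : ℝ)) with hE
  set S := (polys m (r + 1)).filter fun f => (1 / 2 : ℝ) ^ l ≤ bias f with hS
  have hKN : (K : ℝ) ≤ N := Nat.cast_le.2 hK
  have hN0 : 0 ≤ N := by positivity
  have hE0 : 0 < E := Real.exp_pos _
  have hterm : ∀ f ∈ (polys m (r + 1)).filter
      (fun f => (1 / 2 : ℝ) ^ l ≤ bias f ∧ bias f ≤ 2 * (1 / 2) ^ l),
      (1 + bias f) ^ K ≤ Real.exp (2 * (1 / 2) ^ l * N) := by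
    intro f hf
    obtain ⟨h1, h2⟩ := (Finset.mem_filter.1 hf).2
    have hb0 : 0 ≤ bias f := le_trans (by positivity) h1
    calc _ ≤ Real.exp (bias f) ^ K := by
          gcongr
          linarith [Real.add_one_le_exp (bias f)]
      _ = Real.exp (K * bias f) := (Real.exp_nat_mul _ _).symm
      _ ≤ _ := by
          refine Real.exp_le_exp.2 ?_
          calc K * bias f ≤ N * (2 * (1 / 2) ^ l) := by gcongr
            _ = _ := mul_comm _ _
  have hsub : (((polys m (r + 1)).filter
      (fun f => (1 / 2 : ℝ) ^ l ≤ bias f ∧ bias f ≤ 2 * (1 / 2) ^ l)).card : ℝ) ≤ S.card := by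
    refine Nat.cast_le.2 (Finset.card_le_card fun f hf => ?_)
    obtain ⟨h1, h2⟩ := Finset.mem_filter.1 hf
    exact Finset.mem_filter.2 ⟨h1, h2.1⟩
  have hsqrt : √N ≤ N * E := by
    have h1 : Real.exp (l / 16 : ℝ) ≤ N := by
      have h2 : Real.exp (l / 16 : ℝ) ^ 16 ≤ N ^ 16 := by
        rcases Nat.eq_zero_or_pos (binomLT m (r + 1)) with h0 | hpos
        · rw [h0] at hlN
          simp at hlN
        have h1N : 1 ≤ N := Nat.one_le_cast.2 hpos
        have hlN' : (2 : ℝ) ^ l ≤ N ^ 2 := by rw [hN]; exact_mod_cast hlN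
        calc Real.exp (l / 16 : ℝ) ^ 16 = Real.exp 1 ^ l := by
              rw [← Real.exp_nat_mul, ← Real.exp_nat_mul]
              push_cast
              ring_nf
          _ ≤ (2 ^ 2) ^ l := by
              gcongr
              linarith [Real.exp_one_lt_d9]
          _ = (2 ^ l) ^ 2 := by rw [← pow_mul, ← pow_mul, mul_comm]
          _ ≤ (N ^ 2) ^ 2 := by gcongr
          _ = N ^ 4 := by ring
          _ ≤ N ^ 16 := pow_le_pow_right₀ h1N (by norm_num)
      exact le_of_pow_le_pow_left₀ (by norm_num) hN0 h2
    have h3 : 1 ≤ N * E ^ 2 := by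
      have h4 : Real.exp (l / 16 : ℝ) * E ^ 2 = 1 := by
        rw [hE, sq, ← Real.exp_add, ← Real.exp_add]
        ring_nf
        exact Real.exp_zero
      rw [← h4]
      gcongr
    refine Real.sqrt_le_iff.2 ⟨by positivity, ?_⟩
    nlinarith
  have hsmall : 2 * (1 / 2 : ℝ) ^ l ≤ 9 / 2000 * E := by
    have h1 : (1 / 2 : ℝ) ≤ Real.exp (-(1 / 32 : ℝ)) * (3 / 4) := by
      linarith [Real.add_one_le_exp (-(1 / 32 : ℝ))]
    have h2 : E = Real.exp (-(1 / 32 : ℝ)) ^ l := by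
      rw [← Real.exp_nat_mul, hE]
      ring_nf
    have h3 : (3 / 4 : ℝ) ^ l ≤ (3 / 4) ^ 41 :=
      pow_le_pow_of_le_one (by norm_num) (by norm_num) hl
    calc 2 * (1 / 2 : ℝ) ^ l ≤ 2 * (Real.exp (-(1 / 32 : ℝ)) * (3 / 4)) ^ l := by gcongr
      _ = 2 * (3 / 4) ^ l * E := by rw [mul_pow, h2]; ring
      _ ≤ _ := by
        gcongr
        linarith [show (3 / 4 : ℝ) ^ 41 ≤ 9 / 4000 by norm_num]
  calc _ ≤ (((polys m (r + 1)).filter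
      (fun f => (1 / 2 : ℝ) ^ l ≤ bias f ∧ bias f ≤ 2 * (1 / 2) ^ l)).card : ℝ) *
        Real.exp (2 * (1 / 2) ^ l * N) := by
        rw [← nsmul_eq_mul]
        exact Finset.sum_le_card_nsmul _ _ _ hterm
    _ ≤ S.card * Real.exp (2 * (1 / 2) ^ l * N) := by gcongr
    _ ≤ S.card * Real.exp (69 / 2000 * (N * E) + -(3 / 100 * √N)) := by
        gcongr
        nlinarith
    _ = S.card * Real.exp (69 / 2000 * (N * E)) * Real.exp (-(3 / 100 * √N)) := by
        rw [Real.exp_add, mul_assoc]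
    _ ≤ _ := by gcongr

lemma mul_binomLT_le_succ {m r Q : ℕ} (h : (Q + 1) * r ≤ m) :
    ∀ t ≤ r, Q * binomLT m t ≤ binomLT m (t + 1) := by
  intro t ht
  rw [binomLT, binomLT, Finset.sum_range_succ', Finset.mul_sum]
  refine le_trans (Finset.sum_le_sum fun i hi => ?_) (Nat.le_add_right _ _)
  have hi' : i + 1 ≤ r := (Nat.succ_le_of_lt (Finset.mem_range.1 hi)).trans ht
  have h1 := Nat.choose_succ_right_eq m i
  have h2 : Q * (i + 1) ≤ m - i := by
    have h3 : (Q + 1) * (i + 1) ≤ (Q + 1) * r := Nat.mul_le_mul_left _ hi'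
    have h4 : (Q + 1) * (i + 1) = Q * (i + 1) + (i + 1) := by ring
    omega
  refine Nat.le_of_mul_le_mul_right ?_ (Nat.succ_pos i)
  calc Q * m.choose i * (i + 1) = m.choose i * (Q * (i + 1)) := by ring
    _ ≤ m.choose i * (m - i) := Nat.mul_le_mul_left _ h2
    _ = _ := h1.symm

lemma card_bias_pow_le' {m r : ℕ} (hr : 1 ≤ r) (hm : 2 ^ 102 * r ≤ m) :
    ((polys m (r + 1)).filter fun f => (1 / 2 : ℝ) ^ 40 ≤ bias f).card ^ 128 ≤
      2 ^ binomLT m (r + 1) := by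
  rcases Nat.lt_or_ge r 2 with h | h
  · obtain rfl : r = 1 := by omega
    have h1 : ((polys m (1 + 1)).filter fun f => (1 / 2 : ℝ) ^ 40 ≤ bias f).card ≤ 1 := by
      have h0 : ∀ f ∈ (polys m (1 + 1)).filter (fun f => (1 / 2 : ℝ) ^ 40 ≤ bias f), f = 0 := by
        intro f hf
        obtain ⟨h1, h2⟩ := Finset.mem_filter.1 hf
        by_contra hne
        have h3 := two_pow_le_weight (mem_polys.1 h1) hne
        have h4 : (2 : ℝ) ^ m ≤ weight f * 2 ^ 1 := by exact_mod_cast h3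
        have h5 : 1 ≤ 2 * weight f / (2 : ℝ) ^ m := by
          rw [one_le_div (by positivity)]
          linarith
        have h6 : (0 : ℝ) < (1 / 2) ^ 40 := by positivity
        rw [bias_eq] at h2
        linarith
      exact Finset.card_le_one.2 fun f hf g hg => by rw [h0 f hf, h0 g hg]
    exact (Nat.pow_le_one_iff (by norm_num)).2 h1 |>.trans Nat.one_le_two_pow
  · obtain ⟨q, rfl⟩ : ∃ q, r = q + 1 := ⟨r - 1, by omega⟩
    exact card_bias_pow_le (by omega) (mul_binomLT_le_succ (by omega))

lemma one_add_bias_nonneg {m : ℕ} (f : Cube m → ZMod 2) : 0 ≤ 1 + bias f := by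
  have h : weight f ≤ 2 ^ m := by
    rw [← card_cube]
    exact Finset.card_le_univ _
  have h' : (weight f : ℝ) ≤ 2 ^ m := by exact_mod_cast h
  have : 2 * weight f / (2 : ℝ) ^ m ≤ 2 := by
    rw [div_le_iff₀ (by positivity)]
    linarith
  rw [bias_eq]
  linarith

lemma bias_le_of_lt_weight {m k : ℕ} {f : Cube m → ZMod 2} (h : 2 ^ m ≤ weight f * 2 ^ k) :
    1 + bias f ≤ 2 - 2 * (1 / 2) ^ k := by
  have h' : (2 : ℝ) ^ m ≤ weight f * 2 ^ k := by exact_mod_cast h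
  have : 2 * (1 / 2 : ℝ) ^ k ≤ 2 * weight f / 2 ^ m := by
    rw [one_div_pow, mul_one_div, div_le_div_iff₀ (by positivity) (by positivity)]
    linarith
  rw [bias_eq]
  linarith

/-- A quantity whose power is at most `2 ^ N`, times a power of a base below two. -/
lemma mul_pow_le_exp {a N K q : ℕ} {δ ε : ℝ} (hq : a ^ q ≤ 2 ^ N) (hq0 : 0 < q)
    (hδ1 : δ ≤ 1 / 2) (hδq : 2 * Real.log 2 ≤ δ * q) (hε : ε ≤ 1 / 2)
    (hK : (K : ℝ) ≤ (1 - ε) * N) :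
    (a : ℝ) * (2 - 2 * δ) ^ K ≤ Real.exp ((1 - ε) * N * Real.log 2) := by
  have hlog2 : 0 < Real.log 2 := Real.log_pos (by norm_num)
  have hqR : (0 : ℝ) < q := by exact_mod_cast hq0
  have hδ0 : 0 ≤ δ := by
    by_contra! h
    nlinarith
  have hN0 : (0 : ℝ) ≤ N := by positivity
  have ha : (a : ℝ) ≤ Real.exp (N * Real.log 2 / q) := by
    refine le_of_pow_le_pow_left₀ hq0.ne' (Real.exp_pos _).le ?_
    rw [← Real.exp_nat_mul, mul_div_cancel₀ _ hqR.ne', Real.exp_nat_mul,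
      Real.exp_log (by norm_num)]
    exact_mod_cast hq
  have hpow : (2 - 2 * δ) ^ K ≤ Real.exp ((1 - ε) * N * (Real.log 2 - δ)) := by
    have h1 : 2 - 2 * δ ≤ Real.exp (Real.log 2 - δ) := by
      rw [sub_eq_add_neg (Real.log 2), Real.exp_add, Real.exp_log (by norm_num)]
      linarith [Real.add_one_le_exp (-δ)]
    have h2 : 0 ≤ Real.log 2 - δ := by linarith [Real.log_two_gt_d9]
    calc _ ≤ Real.exp (Real.log 2 - δ) ^ K := by
          gcongr
          linarith
      _ = Real.exp (K * (Real.log 2 - δ)) := (Real.exp_nat_mul _ _).symm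
      _ ≤ _ := by gcongr
  calc _ ≤ Real.exp (N * Real.log 2 / q) * Real.exp ((1 - ε) * N * (Real.log 2 - δ)) := by
        gcongr
        exact pow_nonneg (by linarith) _
    _ = Real.exp (N * Real.log 2 / q + (1 - ε) * N * (Real.log 2 - δ)) := (Real.exp_add _ _).symm
    _ ≤ _ := by
        refine Real.exp_le_exp.2 ?_
        have h1 : N * Real.log 2 / q ≤ N * (δ / 2) := by
          rw [mul_div_assoc]
          refine mul_le_mul_of_nonneg_left ?_ hN0
          rw [div_le_iff₀ hqR]
          linarith
        have h2 : N * (δ / 2) ≤ (1 - ε) * N * δ := by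
          have : 0 ≤ (N : ℝ) * δ := by positivity
          nlinarith
        linarith

/-- The contribution of polynomials of large bias to the moment of the number of zeros. -/
lemma sum_large_bias_le {m r K : ℕ} {ε : ℝ} (hr : 1 ≤ r) (hm : 2 ^ 102 * r ≤ m)
    (hε : ε ≤ 1 / 2) (hK : (K : ℝ) ≤ (1 - ε) * binomLT m (r + 1)) :
    ∑ f ∈ (polys m (r + 1)).filter (fun f => (1 / 2 : ℝ) ^ 40 ≤ bias f), (1 + bias f) ^ K ≤
      (r + 2) * Real.exp ((1 - ε) * binomLT m (r + 1) * Real.log 2) := by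
  classical
  set N := binomLT m (r + 1) with hN
  set S := (polys m (r + 1)).filter fun f => (1 / 2 : ℝ) ^ 40 ≤ bias f with hS
  have hlog2 := Real.log_two_lt_d9
  have hpoint : ∀ f ∈ S, (1 + bias f) ^ K ≤ (if f = 0 then (2 : ℝ) ^ K else 0) +
      ∑ k ∈ Finset.Icc 4 r, (if f ∈ lowWeight m (r + 1) k then
        (2 - 2 * (1 / 2) ^ (k + 1)) ^ K else (0 : ℝ)) + (2 - 2 * (1 / 16)) ^ K := by
    intro f hf
    have hfV := mem_polys.1 (Finset.mem_filter.1 hf).1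
    have hb := one_add_bias_nonneg f
    have hterm : ∀ k : ℕ, (0 : ℝ) ≤ (2 - 2 * (1 / 2) ^ (k + 1)) ^ K := by
      intro k
      have : (1 / 2 : ℝ) ^ (k + 1) ≤ 1 := pow_le_one₀ (by norm_num) (by norm_num)
      exact pow_nonneg (by linarith) _
    have hnn : ∀ k : ℕ, (0 : ℝ) ≤ if f ∈ lowWeight m (r + 1) k then
        (2 - 2 * (1 / 2) ^ (k + 1)) ^ K else (0 : ℝ) := by
      intro k
      split_ifs
      · exact hterm k
      · exact le_rfl
    have hsum := Finset.sum_nonneg fun k (_ : k ∈ Finset.Icc 4 r) => hnn k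
    have hlast : (0 : ℝ) ≤ (2 - 2 * (1 / 16)) ^ K := by positivity
    by_cases h0 : f = 0
    · have h2 : 1 + bias f ≤ 2 := by
        rw [bias_eq]
        have : 0 ≤ 2 * weight f / (2 : ℝ) ^ m := by positivity
        linarith
      have h3 := pow_le_pow_left₀ hb h2 K
      rw [if_pos h0]
      linarith
    · rw [if_neg h0]
      have hdist := two_pow_le_weight hfV h0
      have hex : ∃ j, 2 ^ m < weight f * 2 ^ j := by
        refine ⟨r + 1, ?_⟩
        have : 0 < 2 ^ m := by positivity
        rw [pow_succ, ← mul_assoc]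
        omega
      have hj := Nat.find_spec hex
      have hjr : Nat.find hex ≤ r + 1 := by
        refine Nat.find_min' hex ?_
        have : 0 < 2 ^ m := by positivity
        rw [pow_succ, ← mul_assoc]
        omega
      rcases Nat.lt_or_ge (Nat.find hex) 5 with h5 | h5
      · have h4 : 2 ^ m ≤ weight f * 2 ^ 4 :=
          hj.le.trans (Nat.mul_le_mul_left _ (Nat.pow_le_pow_right (by norm_num) (by omega)))
        have h6 := bias_le_of_lt_weight h4
        have h7 := pow_le_pow_left₀ hb (h6.trans_eq (by norm_num :
          (2 - 2 * (1 / 2) ^ 4 : ℝ) = 2 - 2 * (1 / 16))) K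
        linarith
      · obtain ⟨k, hk⟩ : ∃ k, Nat.find hex = k + 1 := ⟨Nat.find hex - 1, by omega⟩
        have hmin := Nat.find_min hex (m := k) (by omega)
        have hmem : f ∈ lowWeight m (r + 1) k := mem_lowWeight.2 ⟨hfV, not_lt.1 hmin⟩
        rw [hk] at hj
        have h6 := pow_le_pow_left₀ hb (bias_le_of_lt_weight hj.le) K
        have h7 := Finset.single_le_sum (fun k (_ : k ∈ Finset.Icc 4 r) => hnn k)
          (Finset.mem_Icc.2 ⟨by omega, by omega⟩ : k ∈ Finset.Icc 4 r)
        rw [if_pos hmem] at h7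
        linarith
  have hlow := card_lowWeight_pow_le (m := m) (r := r) (mul_binomLT_le_succ (by omega)) r le_rfl
  have hzero : (2 : ℝ) ^ K ≤ Real.exp ((1 - ε) * N * Real.log 2) := by
    rw [← Real.exp_log (show (0 : ℝ) < 2 by norm_num), ← Real.exp_nat_mul,
      Real.log_exp]
    refine Real.exp_le_exp.2 (mul_le_mul_of_nonneg_right hK (Real.log_nonneg (by norm_num)))
  have hmid : (S.card : ℝ) * (2 - 2 * (1 / 16)) ^ K ≤ Real.exp ((1 - ε) * N * Real.log 2) :=
    mul_pow_le_exp (card_bias_pow_le' hr hm) (by norm_num) (by norm_num)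
      (by push_cast; linarith) hε hK
  have hk : ∀ k ∈ Finset.Icc 4 r, ((lowWeight m (r + 1) k).card : ℝ) *
      (2 - 2 * (1 / 2) ^ (k + 1)) ^ K ≤ Real.exp ((1 - ε) * N * Real.log 2) := by
    intro k hk
    have hk4 := (Finset.mem_Icc.1 hk).1
    refine mul_pow_le_exp (hlow k hk4) (by positivity) ?_ ?_ hε hK
    · calc (1 / 2 : ℝ) ^ (k + 1) ≤ (1 / 2) ^ 1 :=
          pow_le_pow_of_le_one (by norm_num) (by norm_num) (by omega)
        _ = _ := by norm_num
    · have h1 : (1 / 2 : ℝ) ^ (k + 1) * (4 ^ k : ℕ) = 2 ^ k / 2 := by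
        push_cast
        rw [show (4 : ℝ) = 2 * 2 by norm_num, mul_pow, one_div_pow, pow_succ]
        field_simp
      have h2 : (2 : ℝ) ^ 4 ≤ 2 ^ k := pow_le_pow_right₀ (by norm_num) hk4
      rw [h1]
      linarith
  refine (Finset.sum_le_sum hpoint).trans ?_
  rw [Finset.sum_add_distrib, Finset.sum_add_distrib, Finset.sum_const, nsmul_eq_mul,
    Finset.sum_comm]
  have h1 : ∑ f ∈ S, (if f = 0 then (2 : ℝ) ^ K else 0) ≤ 2 ^ K := by
    rw [Finset.sum_ite_eq']
    split_ifs
    · exact le_rfl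
    · positivity
  have h2 : ∑ k ∈ Finset.Icc 4 r, ∑ f ∈ S, (if f ∈ lowWeight m (r + 1) k then
      (2 - 2 * (1 / 2) ^ (k + 1)) ^ K else (0 : ℝ)) ≤
      r * Real.exp ((1 - ε) * N * Real.log 2) := by
    refine (Finset.sum_le_card_nsmul _ _ (Real.exp ((1 - ε) * N * Real.log 2))
      fun k hk' => ?_).trans ?_
    · refine le_trans ?_ (hk k hk')
      rw [← Finset.sum_filter, Finset.sum_const, nsmul_eq_mul]
      have hpos : (0 : ℝ) ≤ (2 - 2 * (1 / 2) ^ (k + 1)) ^ K := by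
        have : (1 / 2 : ℝ) ^ (k + 1) ≤ 1 := pow_le_one₀ (by norm_num) (by norm_num)
        exact pow_nonneg (by linarith) _
      refine mul_le_mul_of_nonneg_right (Nat.cast_le.2 (Finset.card_le_card ?_)) hpos
      exact fun f hf => (Finset.mem_filter.1 hf).2
    · rw [nsmul_eq_mul]
      refine mul_le_mul_of_nonneg_right (Nat.cast_le.2 ?_) (Real.exp_pos _).le
      rw [Nat.card_Icc]
      omega
  linarith

/-- The moment of the number of zeros of a random polynomial. -/
lemma sum_one_add_bias_pow_le {m r K : ℕ} {ε : ℝ} (hr : 1 ≤ r) (hm : 2 ^ 102 * r ≤ m)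
    (hε0 : 0 ≤ ε) (hε : ε ≤ 1 / 2) (hK : (K : ℝ) ≤ (1 - ε) * binomLT m (r + 1)) :
    ∑ f ∈ polys m (r + 1), (1 + bias f) ^ K ≤ 2 ^ binomLT m (r + 1) *
      ((r + 2) * Real.exp (-(ε * Real.log 2) * binomLT m (r + 1)) +
        (binomLT m (r + 1) : ℝ) ^ 2 *
          (2 * Real.exp (-(3 / 100 * √(binomLT m (r + 1))))) +
        Real.exp (2 / binomLT m (r + 1))) := by
  classical
  set N := binomLT m (r + 1) with hN
  have hN1 : 1 ≤ N := by
    rw [hN, binomLT, Finset.sum_range_succ']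
    simp
  have hN1' : (1 : ℝ) ≤ N := Nat.one_le_cast.2 hN1
  have hKN : K ≤ N := by
    have : (K : ℝ) ≤ N := hK.trans (by nlinarith)
    exact_mod_cast this
  set L := Nat.log 2 (N ^ 2) with hL
  have hL1 : 2 ^ L ≤ N ^ 2 := Nat.pow_log_le_self 2 (by positivity)
  have hL2 : N ^ 2 < 2 ^ (L + 1) := Nat.lt_pow_succ_log_self (by norm_num) _
  have hLN : L ≤ N ^ 2 := (Nat.lt_two_pow_self).le.trans hL1
  have hpoint : ∀ f ∈ polys m (r + 1), (1 + bias f) ^ K ≤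
      (if (1 / 2 : ℝ) ^ 40 ≤ bias f then (1 + bias f) ^ K else 0) +
      ∑ l ∈ Finset.Icc 41 L, (if (1 / 2 : ℝ) ^ l ≤ bias f ∧ bias f ≤ 2 * (1 / 2) ^ l then
        (1 + bias f) ^ K else 0) + Real.exp (2 / N) := by
    intro f _
    have hb := one_add_bias_nonneg f
    have hbK : 0 ≤ (1 + bias f) ^ K := pow_nonneg hb K
    have hnn : ∀ l : ℕ, (0 : ℝ) ≤ if (1 / 2 : ℝ) ^ l ≤ bias f ∧ bias f ≤ 2 * (1 / 2) ^ l then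
        (1 + bias f) ^ K else 0 := by
      intro l
      split_ifs
      · exact hbK
      · exact le_rfl
    have hsum := Finset.sum_nonneg fun l (_ : l ∈ Finset.Icc 41 L) => hnn l
    have hexp := (Real.exp_pos (2 / (N : ℝ))).le
    split_ifs with h40
    · linarith
    push Not at h40
    rcases le_or_gt (bias f) ((1 / 2) ^ L) with hle | hgt
    · have h1 : (1 + bias f) ^ K ≤ Real.exp (2 / N) := by
        calc (1 + bias f) ^ K ≤ Real.exp ((1 / 2) ^ L) ^ K := by
              gcongr
              linarith [Real.add_one_le_exp ((1 / 2 : ℝ) ^ L)]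
          _ = Real.exp (K * (1 / 2) ^ L) := (Real.exp_nat_mul _ _).symm
          _ ≤ _ := by
              refine Real.exp_le_exp.2 ?_
              have h2 : (N : ℝ) ^ 2 ≤ 2 ^ L * 2 := by
                rw [← pow_succ]
                exact_mod_cast hL2.le
              have h3 : (K : ℝ) ≤ N := Nat.cast_le.2 hKN
              rw [one_div_pow, mul_one_div, div_le_div_iff₀ (by positivity) (by positivity)]
              nlinarith
      linarith
    · have hex : ∃ l, (1 / 2 : ℝ) ^ l ≤ bias f := ⟨L, hgt.le⟩
      have hl := Nat.find_spec hex
      have hlL : Nat.find hex ≤ L := Nat.find_min' hex hgt.le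
      have hl41 : 41 ≤ Nat.find hex := by
        by_contra! hlt
        have : (1 / 2 : ℝ) ^ 40 ≤ (1 / 2) ^ Nat.find hex :=
          pow_le_pow_of_le_one (by norm_num) (by norm_num) (by omega)
        linarith
      obtain ⟨k, hk⟩ : ∃ k, Nat.find hex = k + 1 := ⟨Nat.find hex - 1, by omega⟩
      have hmin := Nat.find_min hex (m := k) (by omega)
      have h2 : bias f ≤ 2 * (1 / 2) ^ Nat.find hex := by
        rw [hk, pow_succ]
        linarith
      have h7 := Finset.single_le_sum (fun l (_ : l ∈ Finset.Icc 41 L) => hnn l)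
        (Finset.mem_Icc.2 ⟨hl41, hlL⟩)
      rw [if_pos ⟨hl, h2⟩] at h7
      linarith
  refine (Finset.sum_le_sum hpoint).trans ?_
  rw [Finset.sum_add_distrib, Finset.sum_add_distrib, Finset.sum_const, nsmul_eq_mul, card_polys,
    ← Finset.sum_filter, Finset.sum_comm]
  have h1 := sum_large_bias_le hr hm hε hK
  have h1' : Real.exp ((1 - ε) * N * Real.log 2) =
      2 ^ N * Real.exp (-(ε * Real.log 2) * N) := by
    rw [← Real.exp_log (show (0 : ℝ) < 2 ^ N by positivity), ← Real.exp_add, Real.log_pow]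
    congr 1
    ring
  have h2 : ∑ l ∈ Finset.Icc 41 L, ∑ f ∈ polys m (r + 1),
      (if (1 / 2 : ℝ) ^ l ≤ bias f ∧ bias f ≤ 2 * (1 / 2) ^ l then (1 + bias f) ^ K else 0) ≤
      (N : ℝ) ^ 2 * (2 * 2 ^ N * Real.exp (-(3 / 100 * √N))) := by
    refine (Finset.sum_le_card_nsmul _ _ (2 * 2 ^ N * Real.exp (-(3 / 100 * √N)))
      fun l hl => ?_).trans ?_
    · obtain ⟨hl1, hl2⟩ := Finset.mem_Icc.1 hl
      rw [← Finset.sum_filter]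
      exact sum_level_le hr hm hl1 ((Nat.pow_le_pow_right (by norm_num) hl2).trans hL1) hKN
    · rw [nsmul_eq_mul]
      refine mul_le_mul_of_nonneg_right ?_ (by positivity)
      rw [Nat.card_Icc]
      have : L + 1 - 41 ≤ N ^ 2 := by omega
      exact_mod_cast this
  rw [h1'] at h1
  push_cast
  linarith

open Filter Topology in
lemma tendsto_moment_bound {c : ℝ} (hc : 0 < c) :
    Tendsto (fun N : ℕ => (N + 2 : ℝ) * Real.exp (-c * N) +
      (N : ℝ) ^ 2 * (2 * Real.exp (-(3 / 100 * √N))) + Real.exp (2 / N)) atTop (𝓝 1) := by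
  have hcast := tendsto_natCast_atTop_atTop (R := ℝ)
  have h1 : Tendsto (fun N : ℕ => (N + 2 : ℝ) * Real.exp (-c * N)) atTop (𝓝 0) := by
    have ha := (tendsto_rpow_mul_exp_neg_mul_atTop_nhds_zero 1 c hc).comp hcast
    have hb := (tendsto_rpow_mul_exp_neg_mul_atTop_nhds_zero 0 c hc).comp hcast
    have := ha.add (hb.const_mul 2)
    simp only [mul_zero, add_zero] at this
    refine this.congr fun N => ?_
    simp only [Function.comp_apply, Real.rpow_one, Real.rpow_zero]
    ring
  have h2 : Tendsto (fun N : ℕ => (N : ℝ) ^ 2 * (2 * Real.exp (-(3 / 100 * √N)))) atTop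
      (𝓝 0) := by
    have ha := ((tendsto_rpow_mul_exp_neg_mul_atTop_nhds_zero 4 (3 / 100) (by norm_num)).comp
      (Real.tendsto_sqrt_atTop.comp hcast)).const_mul 2
    rw [mul_zero] at ha
    refine ha.congr fun N => ?_
    simp only [Function.comp_apply]
    have : √(N : ℝ) ^ (4 : ℝ) = (N : ℝ) ^ 2 := by
      rw [show (4 : ℝ) = (4 : ℕ) by norm_num, Real.rpow_natCast,
        show (4 : ℕ) = 2 * 2 by norm_num, pow_mul, Real.sq_sqrt (Nat.cast_nonneg _)]
    rw [this, neg_mul]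
    ring
  have h3 : Tendsto (fun N : ℕ => Real.exp (2 / (N : ℝ))) atTop (𝓝 1) := by
    have := (tendsto_const_nhds (x := (2 : ℝ))).div_atTop hcast
    have h := (Real.continuous_exp.tendsto 0).comp this
    rwa [Real.exp_zero] at h
  simpa using (h1.add h2).add h3

/-- The moment of the number of zeros is asymptotically that of a random function. -/
lemma exists_sum_one_add_bias_pow_le {ε ρ : ℝ} (hε0 : 0 < ε) (hε : ε ≤ 1 / 2) (hρ : 0 < ρ) :
    ∃ m₀ : ℕ, ∀ m ≥ m₀, ∀ r, 1 ≤ r → 2 ^ 102 * r ≤ m → ∀ K : ℕ,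
      (K : ℝ) ≤ (1 - ε) * binomLT m (r + 1) →
        ∑ f ∈ polys m (r + 1), (1 + bias f) ^ K ≤ 2 ^ binomLT m (r + 1) * (1 + ρ) := by
  have hlim := tendsto_moment_bound (c := ε * Real.log 2)
    (mul_pos hε0 (Real.log_pos (by norm_num)))
  obtain ⟨m₀, hm₀⟩ := Filter.eventually_atTop.1
    (hlim.eventually_le_const (show (1 : ℝ) < 1 + ρ by linarith))
  refine ⟨m₀, fun m hm r hr hrm K hK => ?_⟩
  have hN : m ≤ binomLT m (r + 1) := by
    obtain ⟨t, rfl⟩ : ∃ t, r = t + 1 := ⟨r - 1, by omega⟩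
    refine le_trans ?_ (mul_pow_le_binomLT (Q := 1) (r := t + 1) (fun u hu => ?_) t le_rfl)
    · simp
    · exact mul_binomLT_le_succ (r := t + 1) (by omega) u hu
  refine (sum_one_add_bias_pow_le hr hrm hε0.le hε hK).trans ?_
  refine mul_le_mul_of_nonneg_left (le_trans ?_ (hm₀ _ (hm.trans hN))) (by positivity)
  have : (r : ℝ) ≤ binomLT m (r + 1) := Nat.cast_le.2 (by omega)
  gcongr

/-- The polynomials vanishing along a tuple of points. -/
noncomputable def vanishingPolys {m K : ℕ} (s : ℕ) (z : Fin K → Cube m) :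
    Finset (Cube m → ZMod 2) :=
  (polys m s).filter fun f => ∀ i, f (z i) = 0

lemma card_polys_le {m K s : ℕ} (z : Fin K → Cube m) :
    2 ^ binomLT m s ≤ (vanishingPolys s z).card *
      ((polys m s).image fun f i => f (z i)).card := by
  classical
  rw [← card_polys]
  refine Finset.card_le_mul_card_image _ _ fun a ha => ?_
  obtain ⟨g, hg, rfl⟩ := Finset.mem_image.1 ha
  refine Finset.card_le_card_of_injOn (fun f => f + g) ?_ ?_
  · intro f hf
    obtain ⟨hf1, hf2⟩ := Finset.mem_filter.1 hf
    refine Finset.mem_coe.2 (Finset.mem_filter.2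
      ⟨mem_polys.2 (add_mem (mem_polys.1 hf1) (mem_polys.1 hg)), fun i => ?_⟩)
    change f (z i) + g (z i) = 0
    rw [show f (z i) = g (z i) from congrFun hf2 i]
    exact CharTwo.add_self_eq_zero _
  · intro a _ b _ hab
    exact add_right_cancel hab

lemma two_pow_le_card_vanishing {m K s : ℕ} (z : Fin K → Cube m) :
    2 ^ binomLT m s ≤ (vanishingPolys s z).card * 2 ^ K := by
  refine (card_polys_le z).trans (Nat.mul_le_mul_left _ ((Finset.card_le_univ _).trans ?_))
  simp

lemma two_mul_two_pow_le_card_vanishing {m K s : ℕ} {z : Fin K → Cube m}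
    (h : ¬ InterpolatesOn s z Finset.univ) :
    2 * 2 ^ binomLT m s ≤ (vanishingPolys s z).card * 2 ^ K := by
  classical
  simp only [InterpolatesOn, not_forall] at h
  obtain ⟨φ, hφ⟩ := h
  set A := (polys m s).image fun f i => f (z i) with hA
  have hdisj : Disjoint A (A.image fun a => a + φ) := by
    rw [Finset.disjoint_left]
    intro a ha ha'
    obtain ⟨b, hb, hab⟩ := Finset.mem_image.1 ha'
    obtain ⟨f, hf, rfl⟩ := Finset.mem_image.1 ha
    obtain ⟨g, hg, rfl⟩ := Finset.mem_image.1 hb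
    refine hφ ⟨f + g, add_mem (mem_polys.1 hf) (mem_polys.1 hg), fun i _ => ?_⟩
    have h1 := congrFun hab i
    simp only [Pi.add_apply] at h1
    rw [Pi.add_apply, ← h1, add_right_comm, CharTwo.add_self_eq_zero, zero_add]
  have hcard : 2 * A.card ≤ 2 ^ K := by
    have h1 : (A ∪ A.image fun a => a + φ).card ≤ 2 ^ K := (Finset.card_le_univ _).trans (by simp)
    rw [Finset.card_union_of_disjoint hdisj,
      Finset.card_image_of_injective _ (add_left_injective φ)] at h1
    omega
  calc 2 * 2 ^ binomLT m s ≤ 2 * ((vanishingPolys s z).card * A.card) :=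
        Nat.mul_le_mul_left _ (card_polys_le z)
    _ = (vanishingPolys s z).card * (2 * A.card) := by ring
    _ ≤ _ := Nat.mul_le_mul_left _ hcard

lemma card_zeros {m : ℕ} (f : Cube m → ZMod 2) :
    ((Finset.univ.filter fun x => f x = 0).card : ℝ) = 2 ^ m * ((1 + bias f) / 2) := by
  have h : (Finset.univ.filter fun x => f x = 0).card + weight f = 2 ^ m := by
    rw [weight, Finset.card_filter_add_card_filter_not, Finset.card_univ, card_cube]
  have h' : ((Finset.univ.filter fun x => f x = 0).card : ℝ) + weight f = 2 ^ m := by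
    exact_mod_cast h
  rw [bias_eq, eq_sub_of_add_eq h']
  field_simp
  ring

lemma sum_card_vanishing (m s K : ℕ) :
    ∑ z : Fin K → Cube m, ((vanishingPolys s z).card : ℝ) * 2 ^ K =
      (2 ^ m) ^ K * ∑ f ∈ polys m s, (1 + bias f) ^ K := by
  have h : ∀ f : Cube m → ZMod 2,
      ((Finset.univ.filter fun z : Fin K → Cube m => ∀ i, f (z i) = 0).card : ℝ) =
        (2 ^ m * ((1 + bias f) / 2)) ^ K := by
    intro f
    rw [← card_zeros, ← Nat.cast_pow]
    congr 1
    rw [← Fintype.card_piFinset_const]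
    congr 1
    ext z
    simp [Fintype.mem_piFinset]
  rw [← Finset.sum_mul, Finset.mul_sum]
  simp_rw [vanishingPolys, Finset.card_filter]
  push_cast
  rw [Finset.sum_comm, Finset.sum_mul]
  refine Finset.sum_congr rfl fun f _ => ?_
  have h1 := h f
  rw [Finset.card_filter] at h1
  push_cast at h1
  rw [h1, mul_pow, div_pow]
  field_simp

open Classical in
/-- A bound on the moment makes most tuples of points independent. -/
lemma card_interpolatesOn_ge {m s K : ℕ} {ρ : ℝ}
    (h : ∑ f ∈ polys m s, (1 + bias f) ^ K ≤ 2 ^ binomLT m s * (1 + ρ)) :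
    (1 - ρ) * (2 ^ m) ^ K ≤
      ((Finset.univ.filter fun z : Fin K → Cube m =>
        InterpolatesOn s z Finset.univ).card : ℝ) := by
  set G := Finset.univ.filter fun z : Fin K → Cube m => InterpolatesOn s z Finset.univ with hG
  have hpoint : ∀ z : Fin K → Cube m, (2 : ℝ) ^ binomLT m s *
      (2 - if InterpolatesOn s z Finset.univ then 1 else 0) ≤
        ((vanishingPolys s z).card : ℝ) * 2 ^ K := by
    intro z
    split_ifs with hz
    · have := two_pow_le_card_vanishing (s := s) z
      have h' : (2 : ℝ) ^ binomLT m s ≤ (vanishingPolys s z).card * 2 ^ K := by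
        exact_mod_cast this
      linarith
    · have := two_mul_two_pow_le_card_vanishing hz
      have h' : 2 * (2 : ℝ) ^ binomLT m s ≤ (vanishingPolys s z).card * 2 ^ K := by
        exact_mod_cast this
      linarith
  have hsum := Finset.sum_le_sum fun z (_ : z ∈ Finset.univ) => hpoint z
  rw [sum_card_vanishing, ← Finset.mul_sum, Finset.sum_sub_distrib, Finset.sum_const,
    Finset.card_univ, Fintype.card_fun, card_cube, Fintype.card_fin, nsmul_eq_mul,
    Finset.sum_boole, ← hG] at hsum
  push_cast at hsum
  have h1 : (2 : ℝ) ^ binomLT m s * ((2 ^ m) ^ K * 2 - G.card) ≤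
      2 ^ binomLT m s * ((2 ^ m) ^ K * (1 + ρ)) := by
    calc _ ≤ _ := hsum
      _ ≤ (2 ^ m) ^ K * (2 ^ binomLT m s * (1 + ρ)) := by gcongr
      _ = _ := by ring
  have h2 := le_of_mul_le_mul_left h1 (by positivity)
  linarith

lemma InterpolatesOn.injective {m s K : ℕ} {z : Fin K → Cube m}
    (h : InterpolatesOn s z Finset.univ) : Function.Injective z := by
  intro i j hij
  by_contra hne
  obtain ⟨f, -, hf⟩ := h (Pi.single i 1)
  have h1 := hf i (Finset.mem_univ _)
  have h2 := hf j (Finset.mem_univ _)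
  rw [hij, h2, Pi.single_eq_same, Pi.single_eq_of_ne (Ne.symm hne)] at h1
  exact zero_ne_one h1

lemma InterpolatesOn.interpolates_image {m s K : ℕ} {z : Fin K → Cube m}
    (h : InterpolatesOn s z Finset.univ) : Interpolates s (Finset.univ.image z) := by
  intro φ
  obtain ⟨f, hf, hfz⟩ := h fun i => φ (z i)
  refine ⟨f, hf, fun x hx => ?_⟩
  obtain ⟨i, -, rfl⟩ := Finset.mem_image.1 hx
  exact hfz i (Finset.mem_univ _)

open Classical in
lemma card_interpolatesOn_le (m s K : ℕ) :
    (Finset.univ.filter fun z : Fin K → Cube m => InterpolatesOn s z Finset.univ).card ≤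
      K.factorial *
        (Finset.univ.filter fun Z : Finset (Cube m) => Z.card = K ∧ Interpolates s Z).card := by
  refine Finset.card_le_mul_card_image_of_maps_to (f := fun z => Finset.univ.image z) ?_ _ ?_
  · intro z hz
    have hz' := (Finset.mem_filter.1 hz).2
    refine Finset.mem_filter.2 ⟨Finset.mem_univ _, ?_, hz'.interpolates_image⟩
    rw [Finset.card_image_of_injective _ hz'.injective, Finset.card_univ, Fintype.card_fin]
  · intro Z hZ
    have hcard : Fintype.card (Fin K ↪ Z) = K.factorial := by
      rw [Fintype.card_embedding_eq, Fintype.card_coe, Fintype.card_fin,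
        (Finset.mem_filter.1 hZ).2.1, Nat.descFactorial_self]
    rw [← hcard, ← Fintype.card_coe]
    refine Fintype.card_le_of_injective (fun z => ⟨fun i => ⟨z.1 i, ?_⟩, ?_⟩) ?_
    · exact (Finset.mem_filter.1 z.2).2.subset (Finset.mem_image_of_mem _ (Finset.mem_univ _))
    · intro i j hij
      exact (Finset.mem_filter.1 (Finset.mem_filter.1 z.2).1).2.injective (congrArg Subtype.val hij)
    · intro z z' hzz
      apply Subtype.ext
      funext i
      exact congrArg Subtype.val (DFunLike.congr_fun hzz i)

open Classical in
/-- A bound on the moment makes most sets of points independent. -/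
lemma card_interpolates_ge {m s K : ℕ} {ρ : ℝ}
    (h : ∑ f ∈ polys m s, (1 + bias f) ^ K ≤ 2 ^ binomLT m s * (1 + ρ)) :
    (1 - ρ) * (Nat.card {Z : Finset (Cube m) // Z.card = K} : ℝ) ≤
      ((Finset.univ.filter fun Z : Finset (Cube m) => Z.card = K ∧ Interpolates s Z).card : ℝ) := by
  rcases le_or_gt (1 - ρ) 0 with hρ | hρ
  · exact (mul_nonpos_of_nonpos_of_nonneg hρ (Nat.cast_nonneg _)).trans (Nat.cast_nonneg _)
  have h1 := card_interpolatesOn_ge h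
  have h2 : ((Finset.univ.filter fun z : Fin K → Cube m =>
      InterpolatesOn s z Finset.univ).card : ℝ) ≤ K.factorial *
        ((Finset.univ.filter fun Z : Finset (Cube m) =>
          Z.card = K ∧ Interpolates s Z).card : ℝ) := by
    exact_mod_cast card_interpolatesOn_le m s K
  have h3 : (K.factorial : ℝ) * (Nat.card {Z : Finset (Cube m) // Z.card = K} : ℝ) ≤
      (2 ^ m) ^ K := by
    rw [Nat.card_eq_fintype_card, Fintype.card_finset_len, card_cube]
    have := Nat.descFactorial_le_pow (2 ^ m) K
    rw [Nat.descFactorial_eq_factorial_mul_choose] at this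
    exact_mod_cast this
  have hK : (0 : ℝ) < K.factorial := by positivity
  refine le_of_mul_le_mul_left ?_ hK
  calc _ = (1 - ρ) * (K.factorial * (Nat.card {Z : Finset (Cube m) // Z.card = K} : ℝ)) := by ring
    _ ≤ (1 - ρ) * (2 ^ m) ^ K := by gcongr
    _ ≤ _ := h1.trans h2

lemma interpolates_of_card_le {m s : ℕ} {S T : Finset (Cube m)} (hS : Interpolates s S)
    (hST : S ⊆ polyClosure s T) (hcard : T.card ≤ S.card) : Interpolates s T := by
  classical
  obtain ⟨I, hI, hcl⟩ := exists_interpolatesOn s fun i => (T.equivFin.symm i : Cube m)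
  have hSI : S ⊆ polyClosure s (I.image fun i => (T.equivFin.symm i : Cube m)) := by
    intro x hx
    rw [mem_polyClosure]
    intro f hf hf0
    refine mem_polyClosure.1 (hST hx) f hf fun t ht => ?_
    have h1 := mem_polyClosure.1 (hcl (T.equivFin ⟨t, ht⟩)) f hf hf0
    simpa using h1
  have h1 := card_le_of_subset_polyClosure hS hSI
  have h2 : I.card = Fintype.card (Fin T.card) := by
    refine le_antisymm (Finset.card_le_univ _) ?_
    rw [Fintype.card_fin]
    exact hcard.trans (h1.trans Finset.card_image_le)
  rw [Finset.card_eq_iff_eq_univ] at h2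
  subst h2
  intro φ
  obtain ⟨f, hf, hfI⟩ := hI fun i => φ (T.equivFin.symm i)
  refine ⟨f, hf, fun x hx => ?_⟩
  simpa using hfI (T.equivFin ⟨x, hx⟩) (Finset.mem_univ _)

/-- An interpolating set is determined among sets of at most its size by its polynomial sums. -/
lemma eq_of_sum_eq {m r : ℕ} {S T : Finset (Cube m)} (hS : Interpolates (r + 1) S)
    (hcard : T.card ≤ S.card)
    (hsum : ∀ p ∈ polyLT m (2 * r + 2), ∑ x ∈ S, p x = ∑ x ∈ T, p x) : S = T := by
  classical
  choose f hf hfS using fun z : Cube m => hS (Pi.single z 1)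
  have hkey : ∀ z ∈ S, ∀ g ∈ polyLT m (r + 1), ∀ q ∈ polyLT m 2,
      ∑ x ∈ T, f z x * g x * q x = g z * q z := by
    intro z hz g hg q hq
    have hmem : f z * g * q ∈ polyLT m (2 * r + 2) := by
      have := mul_mem_polyLT (mul_mem_polyLT (hf z) hg) hq
      rwa [show r + r + 1 + 1 = 2 * r + 2 by ring] at this
    have h1 := hsum _ hmem
    simp only [Pi.mul_apply] at h1
    rw [← h1, Finset.sum_eq_single z]
    · rw [hfS z z hz, Pi.single_eq_same, one_mul]
    · intro x hx hxz
      rw [hfS z x hx, Pi.single_eq_of_ne hxz, zero_mul, zero_mul]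
    · exact fun h => absurd hz h
  have hone := one_mem_polyLT m 1
  have hcl : S ⊆ polyClosure (r + 1) T := by
    intro z hz
    rw [mem_polyClosure]
    intro g hg hg0
    have h1 := hkey z hz g hg 1 hone
    rw [Pi.one_apply, mul_one] at h1
    rw [← h1]
    exact Finset.sum_eq_zero fun x hx => by rw [hg0 x hx, mul_zero, zero_mul]
  have hT := interpolates_of_card_le hS hcl hcard
  choose h hh hhT using fun t : Cube m => hT (Pi.single t 1)
  have hdual : ∀ z ∈ S, ∀ t ∈ T, ∀ q ∈ polyLT m 2, f z t * q t = h t z * q z := by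
    intro z hz t ht q hq
    rw [← hkey z hz (h t) (hh t) q hq, Finset.sum_eq_single t]
    · rw [hhT t t ht, Pi.single_eq_same, mul_one]
    · intro x hx hxt
      rw [hhT t x hx, Pi.single_eq_of_ne hxt, mul_zero, zero_mul]
    · exact fun h => absurd ht h
  refine Finset.eq_of_subset_of_card_le (fun z hz => ?_) hcard
  obtain ⟨t, ht, hft⟩ : ∃ t ∈ T, f z t ≠ 0 := by
    by_contra! h0
    have h1 := hkey z hz 1 (one_mem_polyLT m r) 1 hone
    rw [Finset.sum_eq_zero fun x hx => by rw [h0 x hx, zero_mul, zero_mul]] at h1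
    simp at h1
  rw [ne_zero_iff_one] at hft
  have h1 := hdual z hz t ht 1 hone
  rw [hft, Pi.one_apply, Pi.one_apply, mul_one, mul_one] at h1
  have hzt : z = t := by
    funext i
    have h2 := hdual z hz t ht _ (coord_mem_polyLT i)
    rw [hft, ← h1, one_mul, one_mul] at h2
    exact h2.symm
  rwa [hzt]

lemma prod_coord_mem_polyLT {m : ℕ} (S : Finset (Fin m)) :
    (fun x : Cube m => ∏ i ∈ S, x i) ∈ polyLT m (S.card + 1) := by
  classical
  induction S using Finset.induction_on with
  | empty => exact const_mem_polyLT m 0 1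
  | insert a S ha ih =>
    rw [Finset.card_insert_of_notMem ha]
    have h := mul_mem_polyLT ih (coord_mem_polyLT a)
    convert h using 1
    funext x
    rw [Finset.prod_insert ha, Pi.mul_apply, mul_comm]

lemma evalLin_mem_polyLT {m r : ℕ} (c : RMcode m r) :
    (fun x => evalLin m r x c) ∈ polyLT m (r + 1) := by
  have h : (fun x => evalLin m r x c) =
      ∑ S : MonIdx m r, c S • fun x : Cube m => ∏ i ∈ S.1, x i := by
    funext x
    simp [evalLin, LinearMap.sum_apply, Finset.sum_apply, mul_comm]
  rw [h]
  refine Submodule.sum_mem _ fun S _ => Submodule.smul_mem _ _ ?_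
  exact polyLT_mono m (Nat.succ_le_succ S.2) (prod_coord_mem_polyLT S.1)

/-- Errors supported on an interpolating set are uniquely decodable. -/
lemma hammingDist_lt_of_interpolates {m r : ℕ} (hm : 2 * r + 2 ≤ m) {Z : Finset (Cube m)}
    (hZ : Interpolates (r + 1) Z) {p p' e : Cube m → ZMod 2}
    (hp : p ∈ polyLT m (m - 2 * r - 2 + 1)) (hp' : p' ∈ polyLT m (m - 2 * r - 2 + 1))
    (he : {x | e x ≠ 0} ⊆ (Z : Set (Cube m))) (hne : p' ≠ p) :
    hammingDist p (p + e) < hammingDist p' (p + e) := by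
  classical
  by_contra! hle
  set d := p + p' with hd
  set S := Finset.univ.filter fun x => e x ≠ 0 with hS
  set T := Finset.univ.filter fun x => e x + d x ≠ 0 with hT
  have h1 : hammingDist p (p + e) = S.card := by
    rw [hammingDist, hS]
    congr 1
    ext x
    simp
  have hcases : ∀ a b c : ZMod 2, b ≠ a + c ↔ c + (a + b) ≠ 0 := by decide
  have h2 : hammingDist p' (p + e) = T.card := by
    rw [hammingDist, hT]
    congr 1
    ext x
    simp only [Finset.mem_filter, Finset.mem_univ, true_and, hd, Pi.add_apply]
    exact hcases _ _ _
  rw [h1, h2] at hle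
  have hsupp : ∀ (u q : Cube m → ZMod 2),
      ∑ x ∈ Finset.univ.filter (fun x => u x ≠ 0), q x = ∑ x, u x * q x := by
    intro u q
    rw [Finset.sum_filter]
    refine Finset.sum_congr rfl fun x _ => ?_
    rcases zmod_two_cases (u x) with h | h <;> simp [h]
  have hST : S = T := by
    refine eq_of_sum_eq (r := r) (hZ.subset ?_) hle fun q hq => ?_
    · intro x hx
      exact he (Finset.mem_filter.1 hx).2
    · have hdq : d * q ∈ polyLT m m := by
        have h3 := mul_mem_polyLT (add_mem hp hp') hq
        rwa [show m - 2 * r - 2 + (2 * r + 1) + 1 = m by omega] at h3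
      have h4 := sum_eq_zero_of_mem_polyLT hdq
      rw [hS, hT, hsupp e q, hsupp (fun x => e x + d x) q]
      simp_rw [add_mul, Finset.sum_add_distrib]
      simp only [Pi.mul_apply] at h4
      rw [h4, add_zero]
  refine hne (funext fun x => ?_)
  have hx : e x ≠ 0 ↔ e x + d x ≠ 0 := by
    have := Finset.ext_iff.1 hST x
    simpa [hS, hT] using this
  have hcases' : ∀ a b c : ZMod 2, (a ≠ 0 ↔ a + (b + c) ≠ 0) → c = b := by decide
  exact hcases' (e x) (p x) (p' x) hx

end ReedMuller

/-- high-degree RM codes under errors.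
There is an absolute constant `γ₀ > 0` such that for every `ε ∈ (0,1)` and `ρ > 0`
there is `m₀` such that for all `m ≥ m₀` and `1 ≤ r < γ₀ m`, setting
`K = ⌊(1-ε)·binom(m,≤r)⌋`, a uniformly random `K`-element subset `Z ⊆ F₂^m`
satisfies, with probability at least `1 - ρ`: for every codeword of
`RM(m, m-2r-2)` (the evaluation vector of a multilinear polynomial `c` of degree
at most `m-2r-2`) and every error vector `e` supported inside `Z`, that codeword
is the unique codeword at minimal Hamming distance from the received word. -/
theorem high_degree_RM_under_BSC :
    ∃ γ₀ : ℝ, 0 < γ₀ ∧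
      ∀ ε : ℝ, 0 < ε → ε < 1 →
        ∀ ρ : ℝ, 0 < ρ →
          ∃ m₀ : ℕ, ∀ m : ℕ, m₀ ≤ m →
            ∀ r : ℕ, 1 ≤ r → (r : ℝ) < γ₀ * m →
              ∀ K : ℕ, K = ⌊(1 - ε) * (binomLe m r : ℝ)⌋₊ →
                (1 - ρ) *
                    (Nat.card {Z : Finset (Fin m → ZMod 2) // Z.card = K} : ℝ)
                  ≤ (Nat.card {Z : Finset (Fin m → ZMod 2) //
                      Z.card = K ∧
                      ∀ c : RMcode m (m - 2 * r - 2),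
                        ∀ e : (Fin m → ZMod 2) → ZMod 2,
                          {x : Fin m → ZMod 2 | e x ≠ 0} ⊆
                              (Z : Set (Fin m → ZMod 2)) →
                            ∀ c' : RMcode m (m - 2 * r - 2),
                              (fun x => evalLin m (m - 2 * r - 2) x c') ≠
                                  (fun x => evalLin m (m - 2 * r - 2) x c) →
                                hammingDist
                                    (fun x => evalLin m (m - 2 * r - 2) x c)
                                    ((fun x => evalLin m (m - 2 * r - 2) x c) + e) <
                                  hammingDist
                                    (fun x => evalLin m (m - 2 * r - 2) x c')
                                    ((fun x => evalLin m (m - 2 * r - 2) x c) + e)} : ℝ) := by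
  refine ⟨1 / 2 ^ 102, by positivity, fun ε hε hε1 ρ hρ => ?_⟩
  obtain ⟨m₀, hm₀⟩ := ReedMuller.exists_sum_one_add_bias_pow_le
    (lt_min hε one_half_pos) (min_le_right ε (1 / 2)) hρ
  refine ⟨m₀, fun m hm r hr hrm K hK => ?_⟩
  have hrm' : 2 ^ 102 * r ≤ m := by
    have h : (2 : ℝ) ^ 102 * r < m := by
      rw [one_div, inv_mul_eq_div, lt_div_iff₀ (by positivity)] at hrm
      rwa [mul_comm]
    exact_mod_cast h.le
  have hKle : (K : ℝ) ≤ (1 - min ε (1 / 2)) * ReedMuller.binomLT m (r + 1) := by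
    rw [hK]
    refine (Nat.floor_le (mul_nonneg (by linarith) (Nat.cast_nonneg _))).trans ?_
    exact mul_le_mul_of_nonneg_right (by linarith [min_le_left ε (1 / 2)]) (Nat.cast_nonneg _)
  classical
  refine (ReedMuller.card_interpolates_ge (hm₀ m hm r hr hrm' K hKle)).trans ?_
  rw [← Fintype.card_subtype, ← Nat.card_eq_fintype_card]
  refine Nat.cast_le.2 (Nat.card_le_card_of_injective
    (fun Z => ⟨Z.1, Z.2.1, fun c e he c' hne => ?_⟩) fun Z Z' h => ?_)
  · exact ReedMuller.hammingDist_lt_of_interpolates (by omega) Z.2.2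
      (ReedMuller.evalLin_mem_polyLT c) (ReedMuller.evalLin_mem_polyLT c') he hne
  · exact Subtype.ext (Subtype.mk.inj h)
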